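/- arXiv:math-ph/0509057 — 3 statements merged into one kernel-verified Lean document; each statement's English description precedes it below -/
import Mathlib

section
/- Let H be a complex Hilbert space and T a bounded operator on H. For every n ≥ 1, the spectrum of the n-fold tensor power T^{⊗n} on H^{⊗n} equals { Π_{j=1}^n λ_j : λ_j ∈ σ(T), j = 1,…,n }. -/
open scoped InnerProductSpace

/-- An abstract presentation of the `n`-fold Hilbert tensor power of `H`:
a Hilbert space `Hn` together with a map `emb` sending `(x 1, …, x n)` to the
elementary tensor `x 1 ⊗ ⋯ ⊗ x n`, such that inner products of elementary
tensors multiply and the elementary tensors span a dense subspace. -/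
structure TensorPowerStructure (H Hn : Type*) [NormedAddCommGroup H]
    [InnerProductSpace ℂ H] [NormedAddCommGroup Hn] [InnerProductSpace ℂ Hn]
    (n : ℕ) where
  emb : (Fin n → H) → Hn
  inner_emb : ∀ x y : Fin n → H, ⟪emb x, emb y⟫_ℂ = ∏ i, ⟪x i, y i⟫_ℂ
  dense_span : Dense ((Submodule.span ℂ (Set.range emb) : Submodule ℂ Hn) : Set Hn)

/-- `Tn` is the `n`-fold tensor power `T^{⊗n}` of `T`, acting as `T` on each
factor of elementary tensors. -/
def IsTensorPowerOp {H Hn : Type*} [NormedAddCommGroup H] [InnerProductSpace ℂ H]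
    [NormedAddCommGroup Hn] [InnerProductSpace ℂ Hn] {n : ℕ}
    (tp : TensorPowerStructure H Hn n) (T : H →L[ℂ] H) (Tn : Hn →L[ℂ] Hn) : Prop :=
  ∀ x : Fin n → H, Tn (tp.emb x) = tp.emb fun i => T (x i)


section APsec
variable {E : Type*} [NormedAddCommGroup E] [InnerProductSpace ℂ E]

/-- `l` is an approximate eigenvalue of `T`. -/
def AP (T : E →L[ℂ] E) (l : ℂ) : Prop :=
  ∀ ε : ℝ, 0 < ε → ∃ x : E, ‖x‖ = 1 ∧ ‖T x - l • x‖ < ε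

theorem not_AP {T : E →L[ℂ] E} {l : ℂ} (h : ¬ AP T l) :
    ∃ c : ℝ, 0 < c ∧ ∀ x : E, c * ‖x‖ ≤ ‖(algebraMap ℂ (E →L[ℂ] E) l - T) x‖ := by
  unfold AP at h
  push Not at h
  obtain ⟨c, hc, h⟩ := h
  refine ⟨c, hc, fun x => ?_⟩
  have key : (algebraMap ℂ (E →L[ℂ] E) l - T) x = -(T x - l • x) := by
    simp [Algebra.algebraMap_eq_smul_one]
  rw [key, norm_neg]
  by_cases hx : x = 0
  · simp [hx]
  have hx' : 0 < ‖x‖ := norm_pos_iff.mpr hx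
  have h1 := h (((‖x‖⁻¹ : ℝ) : ℂ) • x) (by
    rw [norm_smul]; simp [hx'.ne'])
  have h2 : T (((‖x‖⁻¹ : ℝ) : ℂ) • x) - l • (((‖x‖⁻¹ : ℝ) : ℂ) • x)
      = ((‖x‖⁻¹ : ℝ) : ℂ) • (T x - l • x) := by
    rw [map_smul, smul_sub, smul_comm]
  rw [h2, norm_smul] at h1
  simp only [Complex.norm_real, norm_inv, norm_norm] at h1
  rw [inv_mul_eq_div, le_div_iff₀ hx'] at h1
  exact h1

theorem AP.mem {T : E →L[ℂ] E} {l : ℂ} (h : AP T l) : l ∈ spectrum ℂ T := by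
  rw [spectrum.mem_iff]
  rintro ⟨u, hu⟩
  obtain ⟨x, hx, hx2⟩ := h (1 / (‖(↑u⁻¹ : E →L[ℂ] E)‖ + 1)) (by positivity)
  have key : (u : E →L[ℂ] E) x = -(T x - l • x) := by
    rw [hu]; simp [Algebra.algebraMap_eq_smul_one]
  have h1 : x = (↑u⁻¹ : E →L[ℂ] E) ((u : E →L[ℂ] E) x) := by
    rw [← mul_apply_eq_comp, Units.inv_mul]; rfl
  have h2 : ‖x‖ ≤ ‖(↑u⁻¹ : E →L[ℂ] E)‖ * ‖T x - l • x‖ := by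
    conv_lhs => rw [h1]
    refine (ContinuousLinearMap.le_opNorm _ _).trans ?_
    rw [key, norm_neg]
  rw [hx] at h2
  rw [lt_div_iff₀ (by positivity)] at hx2
  nlinarith [norm_nonneg (T x - l • x), norm_nonneg (↑u⁻¹ : E →L[ℂ] E)]

theorem AP_or [CompleteSpace E] {T : E →L[ℂ] E} {l : ℂ} (h : l ∈ spectrum ℂ T) :
    AP T l ∨ AP (star T) (star l) := by
  by_contra hcon
  rw [not_or] at hcon
  obtain ⟨h1, h2⟩ := hcon
  obtain ⟨c, hc, h1⟩ := not_AP h1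
  obtain ⟨d, hd, h2⟩ := not_AP h2
  rw [spectrum.mem_iff] at h
  apply h
  rw [ContinuousLinearMap.isUnit_iff_bijective,
    ContinuousLinearMap.bijective_iff_dense_range_and_antilipschitz]
  constructor
  · rw [Submodule.topologicalClosure_eq_top_iff, ContinuousLinearMap.orthogonal_range,
      Submodule.eq_bot_iff]
    intro x hx
    have h3 := h2 x
    have h4 : (algebraMap ℂ (E →L[ℂ] E) (star l) - star T)
        = star (algebraMap ℂ (E →L[ℂ] E) l - T) := by
      rw [star_sub, algebraMap_star_comm]
    rw [h4, ContinuousLinearMap.star_eq_adjoint] at h3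
    rw [LinearMap.mem_ker] at hx
    erw [hx] at h3
    rw [norm_zero] at h3
    have : ‖x‖ ≤ 0 := by nlinarith [norm_nonneg x]
    exact norm_le_zero_iff.mp this
  · refine ⟨⟨c⁻¹, by positivity⟩, AddMonoidHomClass.antilipschitz_of_bound _ fun x => ?_⟩
    have := h1 x
    change ‖x‖ ≤ c⁻¹ * _
    rw [inv_mul_eq_div, le_div_iff₀ hc]
    linarith

theorem AP_of_frontier [CompleteSpace E] {T : E →L[ℂ] E} {l : ℂ}
    (h : l ∈ spectrum ℂ T) (hl : l ∉ interior (spectrum ℂ T)) : AP T l := by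
  by_contra hcon
  obtain ⟨c, hc, h1⟩ := not_AP hcon
  have h2 : l ∈ closure (spectrum ℂ T)ᶜ := by
    rw [closure_compl]; exact hl
  obtain ⟨m, hm, hd⟩ := Metric.mem_closure_iff.mp h2 (c / 4) (by positivity)
  rw [Set.mem_compl_iff, spectrum.notMem_iff] at hm
  obtain ⟨u, hu⟩ := hm
  rw [dist_eq_norm] at hd
  rw [spectrum.mem_iff] at h
  apply h
  have hdiff : ∀ x, ‖(algebraMap ℂ (E →L[ℂ] E) l - T) x - (u : E →L[ℂ] E) x‖
      = ‖l - m‖ * ‖x‖ := by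
    intro x
    rw [hu, ← norm_smul]; congr 1
    simp [Algebra.algebraMap_eq_smul_one, sub_smul]
  have hlow : ∀ x, c / 2 * ‖x‖ ≤ ‖(u : E →L[ℂ] E) x‖ := by
    intro x
    have h3 := h1 x
    have h4 := norm_sub_norm_le ((algebraMap ℂ (E →L[ℂ] E) l - T) x) ((u : E →L[ℂ] E) x)
    rw [hdiff x] at h4
    nlinarith [norm_nonneg x]
  have hinv : ‖(↑u⁻¹ : E →L[ℂ] E)‖ ≤ 2 / c := by
    refine ContinuousLinearMap.opNorm_le_bound _ (by positivity) fun x => ?_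
    have h3 := hlow ((↑u⁻¹ : E →L[ℂ] E) x)
    rw [← mul_apply_eq_comp, Units.mul_inv] at h3
    change _ ≤ ‖x‖ at h3
    rw [div_mul_eq_mul_div, le_div_iff₀ hc]
    linarith
  by_cases hE : Nontrivial (E →L[ℂ] E)
  · have hpos : 0 < ‖(↑u⁻¹ : E →L[ℂ] E)‖ := Units.norm_pos u⁻¹
    refine (u.ofNearby _ ?_).isUnit
    have h5 : ‖(algebraMap ℂ (E →L[ℂ] E) l - T) - (u : E →L[ℂ] E)‖ ≤ c / 4 := by
      refine ContinuousLinearMap.opNorm_le_bound _ (by positivity) fun x => ?_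
      rw [sub_apply, hdiff]
      gcongr
    refine h5.trans_lt ?_
    rw [lt_inv_comm₀ (by positivity) hpos]
    refine hinv.trans_lt ?_
    rw [inv_div]
    gcongr; norm_num
  · rw [not_nontrivial_iff_subsingleton] at hE
    exact isUnit_of_subsingleton _

theorem AP_star_of_frontier [CompleteSpace E] {T : E →L[ℂ] E} {l : ℂ}
    (h : l ∈ spectrum ℂ T) (hl : l ∉ interior (spectrum ℂ T)) : AP (star T) (star l) := by
  have hs : spectrum ℂ (star T) = star (spectrum ℂ T) := spectrum.map_star T
  refine AP_of_frontier (by rw [hs]; simpa using h) ?_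
  rw [hs]
  intro hc
  apply hl
  rw [mem_interior_iff_mem_nhds] at hc ⊢
  have h1 : Filter.Tendsto (fun z : ℂ => star z) (nhds l) (nhds (star l)) :=
    continuous_star.tendsto l
  filter_upwards [h1 hc] with z hz
  simpa using hz

open Classical in
theorem AP_prod_red [CompleteSpace E] {T : E →L[ℂ] E} {n : ℕ} :
    ∀ (k : ℕ) (l : Fin n → ℂ), (∀ j, l j ∈ spectrum ℂ T) → (∀ j, l j ≠ 0) →
    (Finset.univ.filter (fun j => l j ∈ interior (spectrum ℂ T))).card = k →
    ∃ l' : Fin n → ℂ, ∏ j, l' j = ∏ j, l j ∧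
      ((∀ j, AP T (l' j)) ∨ (∀ j, AP (star T) (star (l' j)))) := by
  intro k
  induction k using Nat.strong_induction_on with
  | _ k ih =>
  intro l hl h0 hk
  by_cases hA : ∀ j, AP T (l j)
  · exact ⟨l, rfl, Or.inl hA⟩
  by_cases hB : ∀ j, AP (star T) (star (l j))
  · exact ⟨l, rfl, Or.inr hB⟩
  push Not at hA hB
  obtain ⟨a, ha⟩ := hA
  obtain ⟨b, hb⟩ := hB
  have hai : l a ∈ interior (spectrum ℂ T) := by
    by_contra h; exact ha (AP_of_frontier (hl a) h)
  have hbi : l b ∈ interior (spectrum ℂ T) := by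
    by_contra h; exact hb (AP_star_of_frontier (hl b) h)
  have hab : a ≠ b := by
    rintro rfl
    rcases AP_or (hl a) with h | h
    · exact ha h
    · exact hb h
  -- maximal parameter
  let F : Set ℝ := {t | 1 ≤ t ∧ (t : ℂ) * l a ∈ spectrum ℂ T ∧ (t : ℂ)⁻¹ * l b ∈ spectrum ℂ T}
  have hσ : IsClosed (spectrum ℂ T) := spectrum.isClosed T
  have hFne : F.Nonempty := ⟨1, le_rfl, by simpa using hl a, by simpa using hl b⟩
  have hFb : BddAbove F := by
    refine ⟨‖T‖ * ‖(1 : E →L[ℂ] E)‖ / ‖l a‖, ?_⟩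
    rintro t ⟨ht1, ht2, -⟩
    have := spectrum.norm_le_norm_mul_of_mem ht2
    rw [norm_mul, Complex.norm_real, Real.norm_of_nonneg (by linarith)] at this
    rwa [le_div_iff₀ (norm_pos_iff.mpr (h0 a))]
  have hmem : sSup F ∈ closure F := csSup_mem_closure hFne hFb
  have hs1 : 1 ≤ sSup F := le_csSup hFb ⟨le_rfl, by simpa using hl a, by simpa using hl b⟩
  set t := sSup F with ht
  have ht0 : (t : ℂ) ≠ 0 := by
    have : t ≠ 0 := by linarith
    exact_mod_cast this
  have hc1 : ContinuousAt (fun s : ℝ => (s : ℂ) * l a) t := by fun_prop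
  have hc2 : ContinuousAt (fun s : ℝ => (s : ℂ)⁻¹ * l b) t := by
    refine ContinuousAt.mul (ContinuousAt.inv₀ (by fun_prop) ht0) continuousAt_const
  have hta : (t : ℂ) * l a ∈ spectrum ℂ T := by
    rw [← hσ.closure_eq]
    have := hc1.continuousWithinAt.mem_closure_image hmem
    refine closure_mono ?_ this
    rintro _ ⟨s, hs, rfl⟩
    exact hs.2.1
  have htb : (t : ℂ)⁻¹ * l b ∈ spectrum ℂ T := by
    rw [← hσ.closure_eq]
    have := hc2.continuousWithinAt.mem_closure_image hmem
    refine closure_mono ?_ this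
    rintro _ ⟨s, hs, rfl⟩
    exact hs.2.2
  have hbd : (t : ℂ) * l a ∉ interior (spectrum ℂ T) ∨
      (t : ℂ)⁻¹ * l b ∉ interior (spectrum ℂ T) := by
    by_contra hcon
    push Not at hcon
    have e1 := hc1.eventually (isOpen_interior.mem_nhds hcon.1)
    have e2 := hc2.eventually (isOpen_interior.mem_nhds hcon.2)
    obtain ⟨ε, hε, h3⟩ := Metric.eventually_nhds_iff.mp (e1.and e2)
    have h4 := @h3 (t + ε / 2) (by rw [Real.dist_eq, add_sub_cancel_left, abs_of_pos] <;> linarith)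
    have : t + ε / 2 ≤ t :=
      le_csSup hFb ⟨by linarith, interior_subset h4.1, interior_subset h4.2⟩
    linarith
  let l₁ : Fin n → ℂ := fun j => if j = a then (t : ℂ) * l a else
    if j = b then (t : ℂ)⁻¹ * l b else l j
  have l₁a : l₁ a = (t : ℂ) * l a := by simp [l₁]
  have l₁b : l₁ b = (t : ℂ)⁻¹ * l b := by simp [l₁, hab.symm]
  have l₁o : ∀ j, j ≠ a → j ≠ b → l₁ j = l j := by
    intro j h1 h2; simp [l₁, h1, h2]
  have hprod : ∏ j, l₁ j = ∏ j, l j := by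
    let c : Fin n → ℂ := fun j => (if j = a then (t : ℂ) else 1) * (if j = b then (t : ℂ)⁻¹ else 1)
    have : ∀ j, l₁ j = c j * l j := by
      intro j
      by_cases h1 : j = a
      · subst h1; simp [l₁, c, hab]
      · by_cases h2 : j = b
        · subst h2; simp [l₁, c, h1]
        · simp [l₁, c, h1, h2]
    rw [Finset.prod_congr rfl (fun j _ => this j), Finset.prod_mul_distrib]
    have : ∏ j, c j = 1 := by
      simp only [c]
      rw [Finset.prod_mul_distrib, Finset.prod_ite_eq' Finset.univ a (fun _ => (t : ℂ)),
        Finset.prod_ite_eq' Finset.univ b (fun _ => (t : ℂ)⁻¹)]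
      simp [mul_inv_cancel₀ ht0]
    rw [this, one_mul]
  have hl₁ : ∀ j, l₁ j ∈ spectrum ℂ T := by
    intro j
    by_cases h1 : j = a
    · rw [h1, l₁a]; exact hta
    · by_cases h2 : j = b
      · rw [h2, l₁b]; exact htb
      · rw [l₁o j h1 h2]; exact hl j
  have h0₁ : ∀ j, l₁ j ≠ 0 := by
    intro j
    by_cases h1 : j = a
    · rw [h1, l₁a]; exact mul_ne_zero ht0 (h0 a)
    · by_cases h2 : j = b
      · rw [h2, l₁b]; exact mul_ne_zero (inv_ne_zero ht0) (h0 b)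
      · rw [l₁o j h1 h2]; exact h0 j
  have hlt : (Finset.univ.filter (fun j => l₁ j ∈ interior (spectrum ℂ T))).card < k := by
    rw [← hk]
    apply Finset.card_lt_card
    rw [Finset.ssubset_iff_of_subset]
    · rcases hbd with h | h
      · exact ⟨a, by simpa using hai, by simpa [l₁a] using h⟩
      · exact ⟨b, by simpa using hbi, by simpa [l₁b] using h⟩
    · intro j hj
      simp only [Finset.mem_filter, Finset.mem_univ, true_and] at hj ⊢
      by_cases h1 : j = a
      · rw [h1]; exact hai
      · by_cases h2 : j = b
        · rw [h2]; exact hbi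
        · rwa [l₁o j h1 h2] at hj
  obtain ⟨l', h1, h2⟩ := ih _ hlt l₁ hl₁ h0₁ rfl
  exact ⟨l', h1.trans hprod, h2⟩

end APsec

section TPsec
variable {H Hn : Type*} [NormedAddCommGroup H] [InnerProductSpace ℂ H]
    [NormedAddCommGroup Hn] [InnerProductSpace ℂ Hn] {n : ℕ}

theorem tp_ext_vec (tp : TensorPowerStructure H Hn n) {v w : Hn}
    (h : ∀ x, ⟪tp.emb x, v⟫_ℂ = ⟪tp.emb x, w⟫_ℂ) : v = w := by
  have h1 : (innerSL ℂ (v - w)) = (0 : Hn →L[ℂ] ℂ) := by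
    refine ContinuousLinearMap.ext_on tp.dense_span ?_
    rintro _ ⟨x, rfl⟩
    have : ⟪tp.emb x, v - w⟫_ℂ = 0 := by rw [inner_sub_right, h x, sub_self]
    exact inner_eq_zero_symm.mp this
  have h2 : ⟪v - w, v - w⟫_ℂ = 0 := by
    have := congrArg (fun f : Hn →L[ℂ] ℂ => f (v - w)) h1
    exact this
  exact sub_eq_zero.mp (inner_self_eq_zero.mp h2)

theorem tp_ext_op (tp : TensorPowerStructure H Hn n) {P Q : Hn →L[ℂ] Hn}
    (h : ∀ x, P (tp.emb x) = Q (tp.emb x)) : P = Q := by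
  refine ContinuousLinearMap.ext_on tp.dense_span ?_
  rintro _ ⟨x, rfl⟩
  exact h x

theorem tp_norm (tp : TensorPowerStructure H Hn n) (x : Fin n → H) :
    ‖tp.emb x‖ = ∏ i, ‖x i‖ := by
  have h := tp.inner_emb x x
  simp only [inner_self_eq_norm_sq_to_K] at h
  have h2 : ‖tp.emb x‖ ^ 2 = (∏ i, ‖x i‖) ^ 2 := by
    rw [← Finset.prod_pow]
    have h3 : ((‖tp.emb x‖ ^ 2 : ℝ) : ℂ) = ((∏ i, ‖x i‖ ^ 2 : ℝ) : ℂ) := by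
      push_cast
      exact h
    exact_mod_cast h3
  exact (pow_left_inj₀ (norm_nonneg _) (Finset.prod_nonneg fun i _ => norm_nonneg _)
    two_ne_zero).mp h2

theorem tp_inner_update (tp : TensorPowerStructure H Hn n) (y x : Fin n → H) (i : Fin n) (v : H) :
    ⟪tp.emb y, tp.emb (Function.update x i v)⟫_ℂ
      = ⟪y i, v⟫_ℂ * ∏ j ∈ Finset.univ.erase i, ⟪y j, x j⟫_ℂ := by
  rw [tp.inner_emb, ← Finset.mul_prod_erase _ _ (Finset.mem_univ i)]
  congr 1
  · simp
  · refine Finset.prod_congr rfl fun j hj => ?_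
    rw [Function.update_of_ne (Finset.ne_of_mem_erase hj)]

/-- The elementary tensor map as a multilinear map. -/
noncomputable def tpMul (tp : TensorPowerStructure H Hn n) :
    MultilinearMap ℂ (fun _ : Fin n => H) Hn :=
  MultilinearMap.mk' tp.emb
    (fun x i v w => tp_ext_vec tp fun y => by
      rw [inner_add_right]; simp only [tp_inner_update]; rw [inner_add_right]; ring)
    (fun x i c v => tp_ext_vec tp fun y => by
      rw [inner_smul_right]; simp only [tp_inner_update]; rw [inner_smul_right]; ring)

theorem tpMul_apply (tp : TensorPowerStructure H Hn n) (x : Fin n → H) :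
    tpMul tp x = tp.emb x := rfl

theorem tp_AP (tp : TensorPowerStructure H Hn n)
    {T : H →L[ℂ] H} {Tn : Hn →L[ℂ] Hn} (hTn : IsTensorPowerOp tp T Tn)
    (l : Fin n → ℂ) (hl : ∀ j, AP T (l j)) : AP Tn (∏ j, l j) := by
  intro ε hε
  let M : ℝ := max ‖T‖ ‖l‖
  have hM : 0 ≤ M := le_max_of_le_left (norm_nonneg _)
  let K : ℝ := n * M ^ (n - 1)
  have hK : 0 ≤ K := by positivity
  have hδ : 0 < ε / (K + 1) := by positivity
  choose x hx1 hx2 using fun j => hl j _ hδ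
  refine ⟨tp.emb x, by rw [tp_norm]; simp [hx1], ?_⟩
  rw [hTn x]
  have h1 : (∏ j, l j) • tp.emb x = tpMul tp (fun j => l j • x j) := by
    rw [MultilinearMap.map_smul_univ, tpMul_apply]
  rw [h1, ← tpMul_apply]
  have h2 := (tpMul tp).norm_image_sub_le_of_bound (C := 1) zero_le_one
    (fun m => by rw [tpMul_apply, tp_norm, one_mul]) (fun j => T (x j)) (fun j => l j • x j)
  refine h2.trans_lt ?_
  rw [Fintype.card_fin, one_mul]
  have h3 : max ‖fun j => T (x j)‖ ‖fun j => l j • x j‖ ≤ M := by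
    refine max_le ?_ ?_
    · refine (pi_norm_le_iff_of_nonneg hM).mpr fun j => ?_
      have := T.le_opNorm (x j)
      rw [hx1, mul_one] at this
      exact this.trans (le_max_left _ _)
    · refine (pi_norm_le_iff_of_nonneg hM).mpr fun j => ?_
      rw [norm_smul, hx1, mul_one]
      exact (norm_le_pi_norm l j).trans (le_max_right _ _)
  have h4 : ‖(fun j => T (x j)) - (fun j => l j • x j)‖ ≤ ε / (K + 1) := by
    refine (pi_norm_le_iff_of_nonneg hδ.le).mpr fun j => ?_
    exact (hx2 j).le
  calc _ ≤ (n : ℝ) * M ^ (n - 1) * (ε / (K + 1)) := by gcongr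
    _ = K * (ε / (K + 1)) := rfl
    _ < ε := by
      rw [mul_div_assoc', div_lt_iff₀ (by positivity)]
      nlinarith

theorem tp_star [CompleteSpace H] [CompleteSpace Hn] (tp : TensorPowerStructure H Hn n)
    {T : H →L[ℂ] H} {Tn : Hn →L[ℂ] Hn} (hTn : IsTensorPowerOp tp T Tn) :
    IsTensorPowerOp tp (star T) (star Tn) := by
  intro x
  refine tp_ext_vec tp fun y => ?_
  rw [ContinuousLinearMap.star_eq_adjoint, ContinuousLinearMap.adjoint_inner_right, hTn y,
    tp.inner_emb, tp.inner_emb]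
  simp [ContinuousLinearMap.star_eq_adjoint, ContinuousLinearMap.adjoint_inner_right]

theorem tp_isom [CompleteSpace Hn] (tp : TensorPowerStructure H Hn n)
    (g : (Fin n → H) → (Fin n → H))
    (hg : ∀ x y, ⟪tp.emb (g x), tp.emb (g y)⟫_ℂ = ⟪tp.emb x, tp.emb y⟫_ℂ) :
    ∃ P : Hn →L[ℂ] Hn, ∀ x, P (tp.emb x) = tp.emb (g x) := by
  let L := Finsupp.linearCombination ℂ tp.emb
  let M := Finsupp.linearCombination ℂ (fun x => tp.emb (g x))
  have hL : DenseRange L := by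
    have := tp.dense_span
    rw [← Finsupp.range_linearCombination] at this
    simpa [DenseRange, L] using! this
  have hnorm : ∀ c, ‖M c‖ ≤ 1 * ‖L c‖ := by
    intro c
    have h : ⟪M c, M c⟫_ℂ = ⟪L c, L c⟫_ℂ := by
      simp only [M, L, Finsupp.linearCombination_apply, Finsupp.sum_inner, Finsupp.inner_sum,
        inner_smul_left, inner_smul_right, hg]
    rw [one_mul, @norm_eq_sqrt_re_inner ℂ _ _ _ _ (M c), h, ← norm_eq_sqrt_re_inner]
  refine ⟨M.extendOfNorm L, fun x => ?_⟩
  have h := LinearMap.extendOfNorm_eq (f := M) (e := L) hL ⟨1, hnorm⟩ (Finsupp.single x 1)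
  simpa [L, M] using h

theorem tp_factor [CompleteSpace H] [CompleteSpace Hn] (tp : TensorPowerStructure H Hn n)
    (i : Fin n) (S : H →L[ℂ] H) :
    ∃ P : Hn →L[ℂ] Hn, ∀ x, P (tp.emb x) = tp.emb (Function.update x i (S (x i))) := by
  have hS : S ∈ Submodule.span ℂ (unitary (H →L[ℂ] H) : Set (H →L[ℂ] H)) := by
    rw [CStarAlgebra.span_unitary]; trivial
  induction hS using Submodule.span_induction with
  | mem U hU =>
    refine tp_isom tp (fun x => Function.update x i (U (x i))) fun x y => ?_
    rw [tp.inner_emb, tp.inner_emb]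
    refine Finset.prod_congr rfl fun j _ => ?_
    by_cases hj : j = i
    · subst hj
      simp only [Function.update_self]
      rw [← ContinuousLinearMap.adjoint_inner_right, ← ContinuousLinearMap.star_eq_adjoint,
        ← mul_apply_eq_comp, (Unitary.mem_iff.mp hU).1]
      rfl
    · simp [hj]
  | zero =>
    refine ⟨0, fun x => ?_⟩
    have := (tpMul tp).map_update_zero x i
    rw [tpMul_apply] at this
    simpa using this.symm
  | add A B _ _ hA hB =>
    obtain ⟨P, hP⟩ := hA
    obtain ⟨Q, hQ⟩ := hB
    refine ⟨P + Q, fun x => ?_⟩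
    have := (tpMul tp).map_update_add x i (A (x i)) (B (x i))
    simp only [tpMul_apply] at this
    simp [hP, hQ, this]
  | smul c A _ hA =>
    obtain ⟨P, hP⟩ := hA
    refine ⟨c • P, fun x => ?_⟩
    have := (tpMul tp).map_update_smul x i c (A (x i))
    simp only [tpMul_apply] at this
    simp [hP, this]

theorem tp_subset [CompleteSpace H] [CompleteSpace Hn] (tp : TensorPowerStructure H Hn n)
    (T : H →L[ℂ] H) (Tn : Hn →L[ℂ] Hn) (hTn : IsTensorPowerOp tp T Tn) {z : ℂ}
    (hz : z ∈ spectrum ℂ Tn) :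
    ∃ l : Fin n → ℂ, (∀ j, l j ∈ spectrum ℂ T) ∧ z = ∏ j, l j := by
  classical
  choose π hπ using fun i S => tp_factor tp i S
  have hmul : ∀ i A B, π i (A * B) = π i A * π i B := by
    intro i A B
    refine tp_ext_op tp fun x => ?_
    simp [hπ]
  have hone : ∀ i, π i 1 = 1 := by
    intro i
    refine tp_ext_op tp fun x => ?_
    simp [hπ]
  have hsub : ∀ i c, π i (algebraMap ℂ _ c - T) = algebraMap ℂ _ c - π i T := by
    intro i c
    refine tp_ext_op tp fun x => ?_
    have h1 := (tpMul tp).map_update_sub x i (c • x i) (T (x i))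
    have h2 := (tpMul tp).map_update_smul x i c (x i)
    simp only [tpMul_apply, Function.update_eq_self] at h1 h2
    simp [hπ, Algebra.algebraMap_eq_smul_one, h1, h2]
  let s : Set (Hn →L[ℂ] Hn) := Set.range fun i => π i T
  have hcomm : ∀ a ∈ s, ∀ b ∈ s, a * b = b * a := by
    rintro _ ⟨i, rfl⟩ _ ⟨j, rfl⟩
    by_cases hij : i = j
    · rw [hij]
    refine tp_ext_op tp fun x => ?_
    simp [hπ, hij, Ne.symm hij]
    rw [Function.update_comm hij]
  let C : Subalgebra ℂ (Hn →L[ℂ] Hn) := Subalgebra.centralizer ℂ (s.centralizer)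
  have hCcomm : ∀ a b : C, a * b = b * a := fun a b =>
    Subtype.ext (Set.centralizer_centralizer_comm_of_comm hcomm _ a.2 _ b.2)
  have hCcl : IsClosed (C : Set (Hn →L[ℂ] Hn)) := Set.isClosed_centralizer _
  have : CompleteSpace C := hCcl.completeSpace_coe
  let _ : NormedCommRing C := { (inferInstance : NormedRing C) with mul_comm := hCcomm }
  let t : Fin n → C := fun i => ⟨π i T, Set.subset_centralizer_centralizer ⟨i, rfl⟩⟩
  have hprod : ∀ (u : Finset (Fin n)) (x : Fin n → H),
      ((∏ i ∈ u, t i : C) : Hn →L[ℂ] Hn) (tp.emb x)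
        = tp.emb (fun j => if j ∈ u then T (x j) else x j) := by
    intro u
    induction u using Finset.induction_on with
    | empty => intro x; simp
    | insert a u ha ih =>
      intro x
      rw [Finset.prod_insert ha]
      change (π a T) (((∏ i ∈ u, t i : C) : Hn →L[ℂ] Hn) (tp.emb x)) = _
      rw [ih, hπ]
      congr 1
      ext j
      by_cases hj : j = a
      · subst hj; simp [ha]
      · simp [hj]
  have hTn' : ((∏ i, t i : C) : Hn →L[ℂ] Hn) = Tn := by
    refine tp_ext_op tp fun x => ?_
    rw [hprod, hTn x]; simp
  have hz' : z ∈ spectrum ℂ (∏ i, t i : C) := by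
    rw [spectrum.mem_iff] at hz ⊢
    intro hu
    apply hz
    have := hu.map C.val
    rw [← hTn']
    simpa only [map_sub, AlgHom.commutes] using! this
  obtain ⟨f, hf⟩ := WeakDual.CharacterSpace.mem_spectrum_iff_exists.mp hz'
  refine ⟨fun i => f (t i), fun i => ?_, by rw [← hf, map_prod]⟩
  rw [spectrum.mem_iff]
  intro hu
  -- the inverse lies in C
  obtain ⟨u, hu⟩ := hu
  have e1 : π i ↑u⁻¹ * (algebraMap ℂ _ (f (t i)) - π i T) = 1 := by
    rw [← hsub, ← hu, ← hmul, Units.inv_mul, hone]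
  have e2 : (algebraMap ℂ _ (f (t i)) - π i T) * π i ↑u⁻¹ = 1 := by
    rw [← hsub, ← hu, ← hmul, Units.mul_inv, hone]
  set a : Hn →L[ℂ] Hn := algebraMap ℂ _ (f (t i)) - π i T with ha
  set b := π i ↑u⁻¹ with hb
  have haC : a ∈ C := C.sub_mem (C.algebraMap_mem _) (t i).2
  have hbC : b ∈ C := by
    intro y hy
    have h1 : y * a = a * y := haC y hy
    calc y * b = b * a * (y * b) := by rw [e1, one_mul]
      _ = b * (a * y) * b := by simp only [mul_assoc]
      _ = b * (y * a) * b := by rw [h1]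
      _ = b * y * (a * b) := by simp only [mul_assoc]
      _ = b * y := by rw [e2, mul_one]
  have h3 : (⟨b, hbC⟩ : C) * (algebraMap ℂ C (f (t i)) - t i) = 1 := Subtype.ext e1
  have h4 := congrArg f h3
  rw [map_mul, map_sub, AlgHomClass.commutes, map_one] at h4
  simp at h4

end TPsec

/-- The spectrum of the `n`-fold tensor power `T^{⊗n}` equals the set of products
`λ₁ ⋯ λₙ` with each `λⱼ ∈ σ(T)`. -/
theorem spectrum_tensorPow_eq_prod
    {H Hn : Type*} [NormedAddCommGroup H] [InnerProductSpace ℂ H] [CompleteSpace H]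
    [Nontrivial H]
    [NormedAddCommGroup Hn] [InnerProductSpace ℂ Hn] [CompleteSpace Hn]
    {n : ℕ} (hn : 1 ≤ n) (tp : TensorPowerStructure H Hn n)
    (T : H →L[ℂ] H) (Tn : Hn →L[ℂ] Hn) (hTn : IsTensorPowerOp tp T Tn) :
    spectrum ℂ Tn =
      {z : ℂ | ∃ l : Fin n → ℂ, (∀ j, l j ∈ spectrum ℂ T) ∧ z = ∏ j, l j} := by
  apply Set.Subset.antisymm
  · intro z hz
    exact tp_subset tp T Tn hTn hz
  · rintro _ ⟨l, hl, rfl⟩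
    have key : ∃ l' : Fin n → ℂ, ∏ j, l' j = ∏ j, l j ∧
        ((∀ j, AP T (l' j)) ∨ (∀ j, AP (star T) (star (l' j)))) := by
      by_cases h0 : ∀ j, l j ≠ 0
      · exact AP_prod_red _ l hl h0 rfl
      · push Not at h0
        obtain ⟨j, hj⟩ := h0
        refine ⟨fun _ => 0, ?_, ?_⟩
        · rw [Finset.prod_eq_zero (Finset.mem_univ j) rfl,
            Finset.prod_eq_zero (Finset.mem_univ j) hj]
        · have h1 := hl j
          rw [hj] at h1
          rcases AP_or h1 with h | h
          · exact Or.inl fun _ => h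
          · exact Or.inr fun _ => h
    obtain ⟨l', h1, h2⟩ := key
    rw [← h1]
    rcases h2 with h | h
    · exact (tp_AP tp hTn l' h).mem
    · have h3 := (tp_AP tp (tp_star tp hTn) _ h).mem
      rw [spectrum.map_star] at h3
      simpa [← map_prod] using h3
end

section
/- Let H be a nonzero complex Hilbert space and T a bounded operator on H with ‖T‖ < 1. Then the spectrum of the second quantization Γ(T) = ⊕_{n≥0} T^{⊗n} on the Fock space Γ(H) = ⊕_{n≥0} H^{⊗n} equals {1} ∪ closure( ⋃_{n≥1} { Π_{j=1}^n λ_j : λ_j ∈ σ(T) } ). -/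
open scoped InnerProductSpace

theorem spec_mul_comm {A : Type*} [NormedRing A] [NormedAlgebra ℂ A] [CompleteSpace A]
    (a b : A) (hab : a * b = b * a) (z : ℂ) (hz : z ∈ spectrum ℂ (a * b)) :
    ∃ l ∈ spectrum ℂ a, ∃ m ∈ spectrum ℂ b, z = l * m := by
  classical
  let C : Subalgebra ℂ A := Subalgebra.centralizer ℂ (Set.centralizer {a, b})
  have hcomm : ∀ x ∈ ({a, b} : Set A), ∀ y ∈ ({a, b} : Set A), x * y = y * x := by
    rintro x (rfl | rfl) y (rfl | rfl) <;> first | rfl | exact hab | exact hab.symm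
  have hC : ∀ x y : C, x * y = y * x := fun x y => Subtype.ext
    (Set.centralizer_centralizer_comm_of_comm hcomm _ x.2 _ y.2)
  have hcl : IsClosed (C : Set A) := Set.isClosed_centralizer _
  have : CompleteSpace C := hcl.completeSpace_coe
  let _ : NormedCommRing C := { (inferInstance : NormedRing C) with mul_comm := hC }
  have hinv : ∀ x : C, IsUnit (x : A) → IsUnit x := by
    rintro ⟨x, hx⟩ ⟨u, hu⟩
    simp only at hu
    have hm : (↑u⁻¹ : A) ∈ C := by
      intro g hg
      have h1 : g * x = x * g := hx g hg
      rw [← hu] at h1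
      exact (Commute.units_inv_right (show Commute g (u : A) from h1))
    refine ⟨⟨⟨x, hx⟩, ⟨↑u⁻¹, hm⟩, ?_, ?_⟩, rfl⟩
    · apply Subtype.ext; simp [← hu]
    · apply Subtype.ext; simp [← hu]
  have hsp : ∀ x : C, spectrum ℂ x ⊆ spectrum ℂ (x : A) := by
    intro x w hw h
    exact hw (hinv _ h)
  have hsp2 : ∀ x : C, spectrum ℂ (x : A) ⊆ spectrum ℂ x := by
    intro x w hw h
    exact hw (h.map C.val)
  have ha : a ∈ C := Set.subset_centralizer_centralizer (by simp)
  have hb : b ∈ C := Set.subset_centralizer_centralizer (by simp)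
  have hz' := hsp2 (⟨a, ha⟩ * ⟨b, hb⟩) hz
  obtain ⟨f, hf⟩ := WeakDual.CharacterSpace.mem_spectrum_iff_exists.1 hz'
  refine ⟨f ⟨a, ha⟩, hsp _ (WeakDual.CharacterSpace.mem_spectrum_iff_exists.2 ⟨f, rfl⟩),
    f ⟨b, hb⟩, hsp _ (WeakDual.CharacterSpace.mem_spectrum_iff_exists.2 ⟨f, rfl⟩), ?_⟩
  rw [← hf, map_mul]

theorem norm_sq_gram {ι E : Type*} [NormedAddCommGroup E] [InnerProductSpace ℂ E]
    (g : ι → E) (c : ι →₀ ℂ) : ((‖∑ a ∈ c.support, c a • g a‖ ^ 2 : ℝ) : ℂ) =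
      ∑ a ∈ c.support, ∑ b ∈ c.support, star (c a) * ⟪g a, g b⟫_ℂ * c b := by
  push_cast
  rw [← Complex.coe_algebraMap, ← inner_self_eq_norm_sq_to_K, sum_inner]
  refine Finset.sum_congr rfl fun i _ => ?_
  rw [inner_sum]
  refine Finset.sum_congr rfl fun j _ => ?_
  rw [inner_smul_left, inner_smul_right]
  simp; ring

open scoped ComplexOrder Matrix in
theorem gram_prod_psd {H : Type*} [NormedAddCommGroup H] [InnerProductSpace ℂ H] {n : ℕ}
    (f : Fin n → (H →L[ℂ] H)) (s : Finset (Fin n)) :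
    (Matrix.of fun a b : Fin n → H => ∏ i ∈ s, ((‖f i‖ ^ 2 : ℝ) • ⟪a i, b i⟫_ℂ)).PosSemidef ∧
    (Matrix.of fun a b : Fin n → H => ∏ i ∈ s, ⟪f i (a i), f i (b i)⟫_ℂ).PosSemidef ∧
    ((Matrix.of fun a b : Fin n → H => ∏ i ∈ s, ((‖f i‖ ^ 2 : ℝ) • ⟪a i, b i⟫_ℂ)) -
    (Matrix.of fun a b : Fin n → H => ∏ i ∈ s, ⟪f i (a i), f i (b i)⟫_ℂ)).PosSemidef := by
  classical
  have hgram : ∀ v : (Fin n → H) → H, (Matrix.gram ℂ v).PosSemidef := by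
    intro v
    have := Matrix.posSemidef_opNorm_smul_gram_sub_gram (𝕜 := ℂ) (fun i => v i) (0 : H →L[ℂ] H)
    refine ⟨Matrix.isHermitian_gram ℂ v, fun c => ?_⟩
    have h : (c.sum fun i xi ↦ c.sum fun j xj ↦ star xi * Matrix.gram ℂ v i j * xj) =
      ((‖∑ x ∈ c.support, c x • v x‖ ^ 2 : ℝ) : ℂ) := by
      rw [norm_sq_gram]; rfl
    rw [h]
    exact Complex.zero_le_real.2 (sq_nonneg _)
  have hone : (Matrix.of fun _ _ : Fin n → H => (1 : ℂ)).PosSemidef := by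
    refine ⟨by ext; simp, fun c => ?_⟩
    have h : (c.sum fun i xi ↦ c.sum fun j xj ↦ star xi *
      (Matrix.of fun _ _ : Fin n → H => (1 : ℂ)) i j * xj) =
      star (∑ x ∈ c.support, c x) * (∑ x ∈ c.support, c x) := by
      simp [Finsupp.sum, Finset.sum_mul_sum]
    rw [h]
    exact star_mul_self_nonneg _
  induction s using Finset.induction_on with
  | empty =>
    refine ⟨by simpa using hone, by simpa using hone, ?_⟩
    simp only [Finset.prod_empty, sub_self]
    exact Matrix.PosSemidef.zero
  | insert i s his ih =>
    obtain ⟨h1, h2, h3⟩ := ih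
    have k1 : ((‖f i‖ ^ 2 : ℝ) • Matrix.gram ℂ (fun a : Fin n → H => a i)).PosSemidef :=
      (hgram _).smul (by positivity)
    have k2 : (Matrix.gram ℂ (fun a : Fin n → H => f i (a i))).PosSemidef := hgram _
    have k3 := Matrix.posSemidef_opNorm_smul_gram_sub_gram (𝕜 := ℂ) (fun a : Fin n → H => a i) (f i)
    simp only [Finset.prod_insert his]
    refine ⟨k1.hadamard h1, k2.hadamard h2, ?_⟩
    have h4 := (k3.hadamard h1).add (k2.hadamard h3)
    refine cast (congrArg _ ?_) h4
    ext a b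
    simp
    ring

open scoped ComplexOrder in
theorem tensor_bound {H Hn : Type*} [NormedAddCommGroup H] [InnerProductSpace ℂ H]
    [NormedAddCommGroup Hn] [InnerProductSpace ℂ Hn] {n : ℕ}
    (tp : TensorPowerStructure H Hn n) (f : Fin n → (H →L[ℂ] H)) (c : (Fin n → H) →₀ ℂ) :
    ‖Finsupp.linearCombination ℂ (fun x => tp.emb fun i => f i (x i)) c‖ ≤
      (∏ i, ‖f i‖) * ‖Finsupp.linearCombination ℂ tp.emb c‖ := by
  have h := (gram_prod_psd f Finset.univ).2.2.2 c
  have key : ∀ g : (Fin n → H) → Hn, ((‖Finsupp.linearCombination ℂ g c‖ ^ 2 : ℝ) : ℂ) =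
      ∑ a ∈ c.support, ∑ b ∈ c.support, star (c a) * ⟪g a, g b⟫_ℂ * c b := by
    intro g
    rw [← norm_sq_gram]; rfl
  have h2 : (c.sum fun a xa ↦ c.sum fun b xb ↦ star xa * (
      (Matrix.of fun a b : Fin n → H => ∏ i, ((‖f i‖ ^ 2 : ℝ) • ⟪a i, b i⟫_ℂ)) -
    (Matrix.of fun a b : Fin n → H => ∏ i, ⟪f i (a i), f i (b i)⟫_ℂ)) a b * xb) =
     (((∏ i, ‖f i‖) ^ 2 * ‖Finsupp.linearCombination ℂ tp.emb c‖ ^ 2 -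
      ‖Finsupp.linearCombination ℂ (fun x => tp.emb fun i => f i (x i)) c‖ ^ 2 : ℝ) : ℂ) := by
    rw [Complex.ofReal_sub, Complex.ofReal_mul, key, key]
    simp only [Finsupp.sum, Matrix.sub_apply, Matrix.of_apply, mul_sub, sub_mul,
      Finset.sum_sub_distrib, tp.inner_emb, Finset.mul_sum, Complex.real_smul,
      Finset.prod_mul_distrib]
    congr 1
    refine Finset.sum_congr rfl fun i _ => Finset.sum_congr rfl fun j _ => ?_
    push_cast
    rw [Finset.prod_pow]
    ring
  rw [h2] at h
  have h3 := Complex.zero_le_real.1 h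
  refine le_of_sq_le_sq ?_ (by positivity)
  rw [mul_pow]
  linarith

theorem exists_top {H Hn : Type*} [NormedAddCommGroup H] [InnerProductSpace ℂ H]
    [NormedAddCommGroup Hn] [InnerProductSpace ℂ Hn] [CompleteSpace Hn] {n : ℕ}
    (tp : TensorPowerStructure H Hn n) (f : Fin n → (H →L[ℂ] H)) :
    ∃ M : Hn →L[ℂ] Hn, (∀ x, M (tp.emb x) = tp.emb fun i => f i (x i)) ∧ ‖M‖ ≤ ∏ i, ‖f i‖ := by
  have hd : DenseRange (Finsupp.linearCombination ℂ tp.emb) := by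
    have := tp.dense_span
    rw [← Finsupp.range_linearCombination] at this
    rw [DenseRange, ← LinearMap.coe_range]; exact this
  refine ⟨(Finsupp.linearCombination ℂ (fun x => tp.emb fun i => f i (x i))).extendOfNorm
    (Finsupp.linearCombination ℂ tp.emb), fun x => ?_, ?_⟩
  · have := LinearMap.extendOfNorm_eq hd ⟨_, tensor_bound tp f⟩ (Finsupp.single x 1)
    simpa using this
  · exact LinearMap.opNorm_extendOfNorm_le hd (by positivity) (tensor_bound tp f)

theorem tensor_ext {H Hn E : Type*} [NormedAddCommGroup H] [InnerProductSpace ℂ H]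
    [NormedAddCommGroup Hn] [InnerProductSpace ℂ Hn] [NormedAddCommGroup E] [NormedSpace ℂ E] {n : ℕ}
    (tp : TensorPowerStructure H Hn n) {A B : Hn →L[ℂ] E}
    (h : ∀ x, A (tp.emb x) = B (tp.emb x)) : A = B :=
  ContinuousLinearMap.ext_on tp.dense_span (by rintro _ ⟨x, rfl⟩; exact h x)

/-- tensor product of operators -/
noncomputable def topM {H Hn : Type*} [NormedAddCommGroup H] [InnerProductSpace ℂ H]
    [NormedAddCommGroup Hn] [InnerProductSpace ℂ Hn] [CompleteSpace Hn] {n : ℕ}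
    (tp : TensorPowerStructure H Hn n) (f : Fin n → (H →L[ℂ] H)) : Hn →L[ℂ] Hn :=
  (exists_top tp f).choose

section topM
variable {H Hn : Type*} [NormedAddCommGroup H] [InnerProductSpace ℂ H]
    [NormedAddCommGroup Hn] [InnerProductSpace ℂ Hn] [CompleteSpace Hn] {n : ℕ}
    (tp : TensorPowerStructure H Hn n)

theorem topM_emb (f : Fin n → (H →L[ℂ] H)) (x : Fin n → H) :
    topM tp f (tp.emb x) = tp.emb fun i => f i (x i) := (exists_top tp f).choose_spec.1 x

theorem topM_norm (f : Fin n → (H →L[ℂ] H)) : ‖topM tp f‖ ≤ ∏ i, ‖f i‖ :=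
  (exists_top tp f).choose_spec.2

theorem topM_mul (f g : Fin n → (H →L[ℂ] H)) : topM tp f * topM tp g = topM tp (f * g) := by
  apply tensor_ext tp
  intro x
  simp [topM_emb]

theorem topM_one : topM tp (1 : Fin n → (H →L[ℂ] H)) = 1 := by
  apply tensor_ext tp
  intro x
  simp [topM_emb]

theorem topM_single_sub (j : Fin n) (S : H →L[ℂ] H) (z : ℂ) :
    topM tp (Pi.mulSingle j (algebraMap ℂ _ z - S)) =
      algebraMap ℂ _ z - topM tp (Pi.mulSingle j S) := by
  apply tensor_ext tp
  intro x
  refine ext_inner_left ℂ fun v => ?_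
  have : (innerSL ℂ (topM tp (Pi.mulSingle j (algebraMap ℂ _ z - S)) (tp.emb x))) =
    innerSL ℂ ((algebraMap ℂ (Hn →L[ℂ] Hn) z - topM tp (Pi.mulSingle j S)) (tp.emb x)) := by
    apply tensor_ext tp
    intro y
    have hz : (algebraMap ℂ (Hn →L[ℂ] Hn) z) (tp.emb x) = z • tp.emb x := by
      simp [Algebra.algebraMap_eq_smul_one]
    have hs : ∀ (R : H →L[ℂ] H), ∏ i, ⟪(Pi.mulSingle j R : Fin n → (H →L[ℂ] H)) i (x i), y i⟫_ℂ =
        ⟪R (x j), y j⟫_ℂ * ∏ i ∈ Finset.univ.erase j, ⟪x i, y i⟫_ℂ := by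
      intro R
      rw [← Finset.mul_prod_erase _ _ (Finset.mem_univ j)]
      congr 1
      · simp
      · refine Finset.prod_congr rfl fun i hi => ?_
        simp [Pi.mulSingle_eq_of_ne (Finset.ne_of_mem_erase hi)]
    have h1 := hs 1
    simp only [Pi.mulSingle_one] at h1
    simp only [innerSL_apply_apply, sub_apply, topM_emb, inner_sub_left, hz,
      inner_smul_left, tp.inner_emb, hs]
    simp only [Pi.one_apply, one_apply_eq_self] at h1
    rw [h1]
    simp [Algebra.algebraMap_eq_smul_one, inner_smul_left]
    ring
  rw [← inner_conj_symm, ← inner_conj_symm v]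
  have := congrArg (fun g => g v) this
  simp only [innerSL_apply_apply] at this
  rw [this]

theorem topM_single_spec (j : Fin n) (S : H →L[ℂ] H) :
    spectrum ℂ (topM tp (Pi.mulSingle j S)) ⊆ spectrum ℂ S := by
  intro z hz h
  apply hz
  obtain ⟨u, hu⟩ := h
  show IsUnit _
  rw [← topM_single_sub, ← hu]
  refine ⟨⟨topM tp (Pi.mulSingle j ↑u), topM tp (Pi.mulSingle j ↑u⁻¹), ?_, ?_⟩, rfl⟩
  · rw [topM_mul, ← Pi.mulSingle_mul]; simp [topM_one]
  · rw [topM_mul, ← Pi.mulSingle_mul]; simp [topM_one]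

theorem topM_spec (T : H →L[ℂ] H) (k : ℕ) (hk : k + 1 ≤ n) (z : ℂ)
    (hz : z ∈ spectrum ℂ (topM tp (fun i => if (i : ℕ) < k + 1 then T else 1))) :
    ∃ l : Fin (k + 1) → ℂ, (∀ j, l j ∈ spectrum ℂ T) ∧ z = ∏ j, l j := by
  have hsing : ∀ (m : ℕ) (hm : m < n), (fun i : Fin n => if (i : ℕ) < m + 1 then T else 1) =
      (fun i : Fin n => if (i : ℕ) < m then T else 1) *
        (Pi.mulSingle (⟨m, hm⟩ : Fin n) T : Fin n → (H →L[ℂ] H)) := by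
    intro m hm
    ext1 i
    rcases eq_or_ne i ⟨m, hm⟩ with rfl | h
    · simp
    · have : (i : ℕ) ≠ m := fun h' => h (Fin.ext h')
      simp only [Pi.mul_apply, Pi.mulSingle_eq_of_ne h, mul_one]
      congr 1
      simp; omega
  induction k generalizing z with
  | zero =>
    rw [hsing 0 (by omega)] at hz
    have h0 : (fun i : Fin n => if (i : ℕ) < 0 then T else 1) = 1 := by ext1 i; simp
    rw [h0, one_mul] at hz
    exact ⟨fun _ => z, fun _ => topM_single_spec tp _ _ hz, by simp⟩
  | succ k ih =>
    rw [hsing (k + 1) (by omega), ← topM_mul] at hz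
    obtain ⟨l, hl, m, hm, rfl⟩ := spec_mul_comm _ _ (by
      rw [topM_mul, topM_mul]
      congr 1
      ext1 i
      rcases eq_or_ne i (⟨k + 1, by omega⟩ : Fin n) with rfl | h
      · simp
      · simp [Pi.mulSingle_eq_of_ne h]) z hz
    obtain ⟨l', hl', rfl⟩ := ih (by omega) l hl
    refine ⟨Fin.snoc l' m, fun j => ?_, by simp [Fin.prod_univ_castSucc]⟩
    refine Fin.lastCases ?_ (fun j => ?_) j
    · simpa using topM_single_spec tp _ _ hm
    · simpa using hl' j

end topM

open Filter Topology in
theorem approx_dichotomy {H : Type*} [NormedAddCommGroup H] [InnerProductSpace ℂ H]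
    [CompleteSpace H] (T : H →L[ℂ] H) (l : ℂ) (hl : l ∈ spectrum ℂ T) :
    ∃ x : ℕ → H, (∀ k, ‖x k‖ = 1) ∧
      (Tendsto (fun k => T (x k) - l • x k) atTop (𝓝 0) ∨
        ∀ k y, ⟪x k, T y⟫_ℂ = l * ⟪x k, y⟫_ℂ) := by
  have happ : ∀ x, (algebraMap ℂ (H →L[ℂ] H) l - T) x = l • x - T x := by
    intro x; simp [Algebra.algebraMap_eq_smul_one]
  by_cases hb : ∃ c : ℝ, 0 < c ∧ ∀ x, c * ‖x‖ ≤ ‖l • x - T x‖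
  · obtain ⟨c, hc, hb⟩ := hb
    have hanti : AntilipschitzWith (Real.toNNReal c⁻¹) (algebraMap ℂ (H →L[ℂ] H) l - T) := by
      apply ContinuousLinearMap.antilipschitz_of_bound
      intro x
      rw [happ, Real.coe_toNNReal _ (by positivity), inv_mul_eq_div, le_div_iff₀ hc, mul_comm]
      exact hb x
    have hnd : ¬ ((algebraMap ℂ (H →L[ℂ] H) l - T).range.topologicalClosure = ⊤) := by
      intro h
      apply hl
      show IsUnit _
      rw [ContinuousLinearMap.isUnit_iff_bijective,
        ContinuousLinearMap.bijective_iff_dense_range_and_antilipschitz]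
      exact ⟨h, _, hanti⟩
    rw [Submodule.topologicalClosure_eq_top_iff, Submodule.eq_bot_iff] at hnd
    push Not at hnd
    obtain ⟨v, hv, hv0⟩ := hnd
    have hvo : ∀ y, ⟪v, T y⟫_ℂ = l * ⟪v, y⟫_ℂ := by
      intro y
      have := Submodule.inner_left_of_mem_orthogonal (LinearMap.mem_range_self _ y) hv
      have h2 : ⟪v, (algebraMap ℂ (H →L[ℂ] H) l - T) y⟫_ℂ = 0 := this
      rw [happ, inner_sub_right, inner_smul_right, sub_eq_zero] at h2
      exact h2.symm
    refine ⟨fun _ => ((‖v‖⁻¹ : ℝ) : ℂ) • v, fun k => ?_, Or.inr fun k y => ?_⟩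
    · rw [norm_smul]
      simp [hv0]
    · rw [inner_smul_left, inner_smul_left, hvo]; ring
  · push Not at hb
    have h1 : ∀ k : ℕ, ∃ x : H, ‖x‖ = 1 ∧ ‖T x - l • x‖ < 1 / ((k : ℝ) + 1) := by
      intro k
      obtain ⟨x, hx⟩ := hb (1 / ((k : ℝ) + 1)) (by positivity)
      have hx0 : x ≠ 0 := by rintro rfl; simp at hx
      have hn : 0 < ‖x‖ := norm_pos_iff.2 hx0
      refine ⟨((‖x‖⁻¹ : ℝ) : ℂ) • x, by rw [norm_smul]; simp [hx0], ?_⟩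
      rw [map_smul, smul_comm l, ← smul_sub, norm_smul, norm_sub_rev]
      simp only [Complex.norm_real, norm_inv, norm_norm]
      rw [inv_mul_eq_div, div_lt_iff₀ hn]
      exact hx
    choose x hx hx2 using h1
    refine ⟨x, hx, Or.inl ?_⟩
    exact squeeze_zero_norm (fun k => (hx2 k).le) tendsto_one_div_add_atTop_nhds_zero_nat

open Filter Topology in
theorem prod_mem_spec {H Hn : Type*} [NormedAddCommGroup H] [InnerProductSpace ℂ H]
    [CompleteSpace H]
    [NormedAddCommGroup Hn] [InnerProductSpace ℂ Hn] [CompleteSpace Hn] {n : ℕ}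
    (tp : TensorPowerStructure H Hn n) (T : H →L[ℂ] H) (l : Fin n → ℂ)
    (hl : ∀ j, l j ∈ spectrum ℂ T) : ∏ j, l j ∈ spectrum ℂ (topM tp fun _ => T) := by
  classical
  choose x hx hx2 using fun j => approx_dichotomy T (l j) (hl j)
  let S : Finset (Fin n) := Finset.univ.filter
    fun j => Tendsto (fun k => T (x j k) - l j • x j k) atTop (𝓝 0)
  have hS : ∀ j ∈ S, Tendsto (fun k => T (x j k) - l j • x j k) atTop (𝓝 0) :=
    fun j hj => (Finset.mem_filter.1 hj).2
  have hS' : ∀ j ∉ S, ∀ k y, ⟪x j k, T y⟫_ℂ = l j * ⟪x j k, y⟫_ℂ := by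
    intro j hj
    refine (hx2 j).resolve_left fun h => hj (Finset.mem_filter.2 ⟨Finset.mem_univ _, h⟩)
  let A := topM tp fun i => if i ∈ S then T else 1
  let B := topM tp fun i => if i ∈ S then 1 else T
  let a : Fin n → ℂ := fun i => if i ∈ S then l i else 1
  let b : Fin n → ℂ := fun i => if i ∈ S then 1 else l i
  have hAB : A * B = topM tp fun _ => T := by
    simp only [A, B, topM_mul]
    congr 1; ext1 i
    by_cases h : i ∈ S <;> simp [h]
  have hBA : B * A = topM tp fun _ => T := by
    simp only [A, B, topM_mul]
    congr 1; ext1 i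
    by_cases h : i ∈ S <;> simp [h]
  have hab : ∏ j, l j = (∏ j, a j) * ∏ j, b j := by
    rw [← Finset.prod_mul_distrib]
    refine Finset.prod_congr rfl fun i _ => ?_
    by_cases h : i ∈ S <;> simp [a, b, h]
  let w : ℕ → Hn := fun k => tp.emb fun j => x j k
  have hww : ∀ k, ⟪w k, w k⟫_ℂ = 1 := by
    intro k
    simp only [w, tp.inner_emb]
    exact Finset.prod_eq_one fun i _ => by rw [inner_self_eq_norm_sq_to_K, hx]; simp
  have hwn : ∀ k, ‖w k‖ = 1 := by
    intro k
    have := hww k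
    rw [inner_self_eq_norm_sq_to_K] at this
    have h2 : ‖w k‖ ^ 2 = 1 := Complex.ofReal_injective (by push_cast; exact this)
    nlinarith [norm_nonneg (w k)]
  have hB : ∀ k u, ⟪w k, B u⟫_ℂ = (∏ j, b j) * ⟪w k, u⟫_ℂ := by
    intro k u
    have : (innerSL ℂ (w k)) ∘L B = (∏ j, b j) • innerSL ℂ (w k) := by
      apply tensor_ext tp
      intro y
      simp only [ContinuousLinearMap.comp_apply, innerSL_apply_apply, smul_apply,
        smul_eq_mul, w, B, topM_emb, tp.inner_emb]
      rw [← Finset.prod_mul_distrib]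
      refine Finset.prod_congr rfl fun i _ => ?_
      by_cases h : i ∈ S
      · simp [b, h]
      · simp [b, h, hS' i h]
    simpa using congrArg (fun g => g u) this
  have hA : Tendsto (fun k => A (w k) - (∏ j, a j) • w k) atTop (𝓝 0) := by
    have hin : ∀ j, Tendsto (fun k => ⟪x j k, (if j ∈ S then T else 1) (x j k)⟫_ℂ) atTop
        (𝓝 (a j)) := by
      intro j
      by_cases h : j ∈ S
      · simp only [h, if_true, a]
        have h1 : ∀ k, ⟪x j k, T (x j k)⟫_ℂ = ⟪x j k, T (x j k) - l j • x j k⟫_ℂ + l j := by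
          intro k
          rw [inner_sub_right, inner_smul_right, inner_self_eq_norm_sq_to_K, hx]
          simp
        simp_rw [h1]
        have h2 : Tendsto (fun k => ⟪x j k, T (x j k) - l j • x j k⟫_ℂ) atTop (𝓝 0) := by
          refine squeeze_zero_norm (fun k => ?_) (tendsto_zero_iff_norm_tendsto_zero.1 (hS j h))
          refine (norm_inner_le_norm _ _).trans ?_
          rw [hx, one_mul]
        simpa using h2.add_const (l j)
      · simp [h, a, inner_self_eq_norm_sq_to_K, hx]
    have hin2 : ∀ j, Tendsto (fun k => ‖(if j ∈ S then T else 1) (x j k)‖ ^ 2) atTop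
        (𝓝 (‖a j‖ ^ 2)) := by
      intro j
      by_cases h : j ∈ S
      · simp only [h, if_true, a]
        refine Tendsto.pow ?_ 2
        have h1 : Tendsto (fun k => ‖T (x j k)‖ - ‖l j‖) atTop (𝓝 0) := by
          refine squeeze_zero_norm (fun k => ?_) (tendsto_zero_iff_norm_tendsto_zero.1 (hS j h))
          have := abs_norm_sub_norm_le (T (x j k)) (l j • x j k)
          rwa [norm_smul, hx, mul_one] at this
        simpa using h1.add_const (‖l j‖)
      · simp [h, a, hx]
    have hp1 := tendsto_finsetProd Finset.univ fun j _ => hin j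
    have hp2 := tendsto_finsetProd Finset.univ fun j _ => hin2 j
    have e1 : ∀ k, ⟪w k, A (w k)⟫_ℂ = ∏ j, ⟪x j k, (if j ∈ S then T else 1) (x j k)⟫_ℂ := by
      intro k; simp only [w, A, topM_emb, tp.inner_emb]
    have e2 : ∀ k, ‖A (w k)‖ ^ 2 = ∏ j, ‖(if j ∈ S then T else 1) (x j k)‖ ^ 2 := by
      intro k
      have : ((‖A (w k)‖ ^ 2 : ℝ) : ℂ) = ∏ j, ((‖(if j ∈ S then T else 1) (x j k)‖ ^ 2 : ℝ) : ℂ) := by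
        push_cast
        rw [← Complex.coe_algebraMap]
        simp only [w, A, topM_emb, ← inner_self_eq_norm_sq_to_K, tp.inner_emb]
      exact_mod_cast this
    have e3 : ∀ k, ‖A (w k) - (∏ j, a j) • w k‖ ^ 2 = ‖A (w k)‖ ^ 2 -
        2 * (starRingEnd ℂ (∏ j, a j) * ⟪w k, A (w k)⟫_ℂ).re + ‖∏ j, a j‖ ^ 2 := by
      intro k
      rw [@norm_sub_sq ℂ, norm_smul, hwn, mul_one, ← inner_re_symm, inner_smul_left]
      rfl
    have hlim : Tendsto (fun k => ‖A (w k) - (∏ j, a j) • w k‖ ^ 2) atTop (𝓝 0) := by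
      simp_rw [e3, e1, e2]
      have h5 := ((hp2.sub ((Complex.continuous_re.tendsto _).comp
        (hp1.const_mul (starRingEnd ℂ (∏ j, a j))) |>.const_mul 2)).add_const (‖∏ j, a j‖ ^ 2))
      have h6 : (0 : ℝ) = ∏ c, ‖a c‖ ^ 2 - 2 * ((starRingEnd ℂ) (∏ j, a j) * ∏ c, a c).re +
          ‖∏ j, a j‖ ^ 2 := by
        rw [← Complex.normSq_eq_conj_mul_self, Complex.ofReal_re, Complex.normSq_eq_norm_sq,
          norm_prod, Finset.prod_pow]
        ring
      rw [h6]
      exact h5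
    rw [tendsto_zero_iff_norm_tendsto_zero]
    have := hlim.sqrt
    simpa using this
  intro hu
  obtain ⟨u, hu⟩ := hu
  let R : Hn →L[ℂ] Hn := ↑u⁻¹
  have hRu : R * (algebraMap ℂ _ (∏ j, l j) - topM tp fun _ => T) = 1 := by
    rw [← hu]; simp [R]
  have hRB : R * B = B * R := by
    have : Commute (u : Hn →L[ℂ] Hn) B := by
      rw [hu]
      refine Commute.sub_left (Algebra.commutes _ _) ?_
      show _ * _ = _ * _
      rw [← hBA, mul_assoc, hAB, hBA]
    exact this.units_inv_left
  have hid : ∀ k, (1 : ℂ) = - ((∏ j, b j) * ⟪w k, R (A (w k) - (∏ j, a j) • w k)⟫_ℂ) := by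
    intro k
    have h1 : ⟪w k, R ((∏ j, l j) • w k - B (A (w k)))⟫_ℂ = 1 := by
      have := congrArg (fun g => ⟪w k, g (w k)⟫_ℂ) hRu
      rw [← hBA] at this
      simpa [Algebra.algebraMap_eq_smul_one, hwn] using this
    have h2 : R (B (A (w k))) = B (R (A (w k))) := congrArg (fun g => g (A (w k))) hRB
    rw [map_sub, inner_sub_right, h2, hB, map_smul, inner_smul_right, hab] at h1
    rw [map_sub, inner_sub_right, map_smul, inner_smul_right, ← h1]
    ring
  have hlim : Tendsto (fun k => - ((∏ j, b j) * ⟪w k, R (A (w k) - (∏ j, a j) • w k)⟫_ℂ)) atTop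
      (𝓝 0) := by
    have h1 : Tendsto (fun k => R (A (w k) - (∏ j, a j) • w k)) atTop (𝓝 0) := by
      have := (R.continuous.tendsto 0).comp hA
      rw [map_zero] at this
      exact this
    have h2 : Tendsto (fun k => ⟪w k, R (A (w k) - (∏ j, a j) • w k)⟫_ℂ) atTop (𝓝 0) := by
      refine squeeze_zero_norm (fun k => ?_) (tendsto_zero_iff_norm_tendsto_zero.1 h1)
      refine (norm_inner_le_norm _ _).trans ?_
      rw [hwn, one_mul]
    simpa using (h2.const_mul (∏ j, b j)).neg
  have : Tendsto (fun _ : ℕ => (1 : ℂ)) atTop (𝓝 0) := by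
    refine hlim.congr fun k => (hid k).symm
  exact one_ne_zero (tendsto_nhds_unique tendsto_const_nhds this)

/-- Spectrum of the second quantization.  Let `H` be a nonzero complex Hilbert
space, `Hn n` the `n`-fold Hilbert tensor powers of `H`, and let `F` (the Fock
space `Γ(H) = ⊕ₙ H^{⊗n}`) be presented by isometries `J n : Hn n → F` with
mutually orthogonal ranges whose union spans a dense subspace.  If `‖T‖ < 1`,
`Tn n = T^{⊗n}`, and `G = Γ(T)` is the bounded operator with `G (J n x) = J n (Tn n x)`,
then `σ(Γ(T)) = {1} ∪ closure( ⋃_{n≥1} { λ₁⋯λₙ : λⱼ ∈ σ(T) } )`. -/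
theorem spectrum_secondQuantization
    {H F : Type*} [NormedAddCommGroup H] [InnerProductSpace ℂ H] [CompleteSpace H]
    [Nontrivial H]
    [NormedAddCommGroup F] [InnerProductSpace ℂ F] [CompleteSpace F]
    (Hn : ℕ → Type*) [∀ n, NormedAddCommGroup (Hn n)]
    [∀ n, InnerProductSpace ℂ (Hn n)] [∀ n, CompleteSpace (Hn n)]
    (tp : ∀ n, TensorPowerStructure H (Hn n) n)
    (J : ∀ n, Hn n →ₗᵢ[ℂ] F)
    (horth : ∀ n m, n ≠ m → ∀ (x : Hn n) (y : Hn m), ⟪J n x, J m y⟫_ℂ = 0)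
    (hdense : Dense ((Submodule.span ℂ
      (⋃ n : ℕ, Set.range (J n)) : Submodule ℂ F) : Set F))
    (T : H →L[ℂ] H) (hT : ‖T‖ < 1)
    (Tn : ∀ n, Hn n →L[ℂ] Hn n) (hTn : ∀ n, IsTensorPowerOp (tp n) T (Tn n))
    (G : F →L[ℂ] F) (hG : ∀ (n : ℕ) (x : Hn n), G (J n x) = J n (Tn n x)) :
    spectrum ℂ G = {1} ∪ closure (⋃ n : ℕ,
      {z : ℂ | ∃ l : Fin (n + 1) → ℂ,
        (∀ j, l j ∈ spectrum ℂ T) ∧ z = ∏ j, l j}) := by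
  classical
  have hTM : ∀ n, Tn n = topM (tp n) (fun _ => T) := by
    intro n
    apply tensor_ext (tp n)
    intro x
    rw [hTn n x, topM_emb]
  have hnorm : ∀ n, ‖Tn n‖ ≤ ‖T‖ ^ n := by
    intro n
    rw [hTM]
    exact (topM_norm _ _).trans (by simp)
  have hT0 : Tn 0 = 1 := by
    apply tensor_ext (tp 0)
    intro x
    rw [hTn 0 x]
    simp only [one_apply_eq_self]
    congr 1
    exact Subsingleton.elim _ _
  have hsub : ∀ n, spectrum ℂ (Tn n) ⊆ spectrum ℂ G := by
    intro n z hz hu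
    apply hz
    let j : Hn n →L[ℂ] F := (J n).toContinuousLinearMap
    let P : F →L[ℂ] Hn n := ContinuousLinearMap.adjoint j
    have hPj : ∀ x, P (j x) = x := by
      intro x
      refine ext_inner_left ℂ fun v => ?_
      rw [ContinuousLinearMap.adjoint_inner_right]
      exact (J n).inner_map_map _ _
    have hP0 : ∀ m, m ≠ n → ∀ x, P (J m x) = 0 := by
      intro m hm x
      refine ext_inner_left ℂ fun v => ?_
      rw [ContinuousLinearMap.adjoint_inner_right, inner_zero_right]
      exact horth _ _ hm.symm _ _
    have hPG : P ∘L G = Tn n ∘L P := by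
      refine ContinuousLinearMap.ext_on hdense ?_
      intro v hv
      obtain ⟨m, x, rfl⟩ := Set.mem_iUnion.1 hv
      simp only [ContinuousLinearMap.comp_apply, hG]
      rcases eq_or_ne m n with rfl | hm
      · have h1 := hPj (Tn m x)
        have h2 := hPj x
        simp only [j, LinearIsometry.coe_toContinuousLinearMap] at h1 h2
        rw [h1, h2]
      · rw [hP0 m hm, hP0 m hm, map_zero]
    have hPG' : ∀ v, P (G v) = Tn n (P v) := fun v => congrArg (fun g => g v) hPG
    obtain ⟨u, hu⟩ := hu
    have hu1 : ∀ v, (u : F →L[ℂ] F) v = z • v - G v := by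
      intro v; rw [hu]; simp [Algebra.algebraMap_eq_smul_one]
    have hl : ∀ v, (↑u⁻¹ : F →L[ℂ] F) ((u : F →L[ℂ] F) v) = v := fun v =>
      congrArg (fun g : F →L[ℂ] F => g v) u.inv_mul
    have hr : ∀ v, (u : F →L[ℂ] F) ((↑u⁻¹ : F →L[ℂ] F) v) = v := fun v =>
      congrArg (fun g : F →L[ℂ] F => g v) u.mul_inv
    refine ⟨⟨_, P ∘L (↑u⁻¹ : F →L[ℂ] F) ∘L j, ?_, ?_⟩, rfl⟩
    · ext x
      have h1 := congrArg P (hr (j x))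
      rw [hu1, map_sub, map_smul, hPG', hPj] at h1
      simpa [Algebra.algebraMap_eq_smul_one] using h1
    · ext x
      have h1 : (u : F →L[ℂ] F) (j x) = j (z • x - Tn n x) := by
        rw [hu1, map_sub, map_smul]
        congr 1
        exact hG n x
      have h2 := congrArg P (hl (j x))
      rw [h1, hPj] at h2
      simpa [Algebra.algebraMap_eq_smul_one] using h2
  apply Set.Subset.antisymm
  · intro z hz
    by_contra hcon
    simp only [Set.mem_union, Set.mem_singleton_iff, not_or] at hcon
    obtain ⟨hz1, hzU⟩ := hcon
    have hz0 : z ≠ 0 := by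
      rintro rfl
      apply hzU
      obtain ⟨l, hl⟩ := spectrum.nonempty T
      have hl1 : ‖l‖ < 1 := (spectrum.norm_le_norm_of_mem hl).trans_lt hT
      have ht := (tendsto_pow_atTop_nhds_zero_of_norm_lt_one hl1).comp (Filter.tendsto_add_atTop_nat 1)
      refine mem_closure_of_tendsto ht (Filter.Eventually.of_forall fun k => ?_)
      exact Set.mem_iUnion.2 ⟨k, fun _ => l, fun _ => hl, by simp⟩
    have hzn : ∀ n, z ∉ spectrum ℂ (Tn n) := by
      intro n hn
      cases n with
      | zero =>
        rw [hT0] at hn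
        apply hn
        show IsUnit _
        rw [← map_one (algebraMap ℂ (Hn 0 →L[ℂ] Hn 0)), ← map_sub]
        exact (isUnit_iff_ne_zero.2 (sub_ne_zero.2 hz1)).map _
      | succ k =>
        apply hzU
        apply subset_closure
        rw [hTM] at hn
        refine Set.mem_iUnion.2 ⟨k, topM_spec (tp (k + 1)) T k le_rfl z ?_⟩
        have : (fun i : Fin (k + 1) => if (i : ℕ) < k + 1 then T else 1) = fun _ => T := by
          ext1 i; rw [if_pos i.2]
        rwa [this]
    have hbn : ∀ n, ∃ c : ℝ, 0 < c ∧ ∀ x : Hn n, c * ‖x‖ ≤ ‖z • x - Tn n x‖ := by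
      intro n
      have h1 : IsUnit (algebraMap ℂ (Hn n →L[ℂ] Hn n) z - Tn n) := by
        by_contra h; exact hzn n h
      rw [ContinuousLinearMap.isUnit_iff_bijective,
        ContinuousLinearMap.bijective_iff_dense_range_and_antilipschitz] at h1
      obtain ⟨-, K, hK⟩ := h1
      refine ⟨((K : ℝ) + 1)⁻¹, by positivity, fun x => ?_⟩
      have h2 := ContinuousLinearMap.bound_of_antilipschitz _ hK x
      have h3 : (algebraMap ℂ (Hn n →L[ℂ] Hn n) z - Tn n) x = z • x - Tn n x := by
        simp [Algebra.algebraMap_eq_smul_one]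
      rw [h3] at h2
      rw [inv_mul_le_iff₀ (by positivity)]
      nlinarith [norm_nonneg (z • x - Tn n x)]
    have hzp : 0 < ‖z‖ := norm_pos_iff.2 hz0
    obtain ⟨N, hN⟩ : ∃ N : ℕ, ∀ n ≥ N, ‖T‖ ^ n < ‖z‖ / 2 := by
      have := (tendsto_pow_atTop_nhds_zero_of_lt_one (norm_nonneg T) hT).eventually_lt_const
        (show 0 < ‖z‖ / 2 by positivity)
      exact Filter.eventually_atTop.1 this
    have hfin : ∀ M : ℕ, ∃ c : ℝ, 0 < c ∧ ∀ n < M, ∀ x : Hn n, c * ‖x‖ ≤ ‖z • x - Tn n x‖ := by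
      intro M
      induction M with
      | zero => exact ⟨1, one_pos, by simp⟩
      | succ M ih =>
        obtain ⟨c, hc, ih⟩ := ih
        obtain ⟨d, hd, hd'⟩ := hbn M
        refine ⟨min c d, lt_min hc hd, fun n hn x => ?_⟩
        rcases Nat.lt_succ_iff_lt_or_eq.1 hn with h | rfl
        · exact (mul_le_mul_of_nonneg_right (min_le_left _ _) (norm_nonneg _)).trans (ih n h x)
        · exact (mul_le_mul_of_nonneg_right (min_le_right _ _) (norm_nonneg _)).trans (hd' x)
    obtain ⟨c, hc, hall⟩ : ∃ c : ℝ, 0 < c ∧ ∀ n, ∀ x : Hn n, c * ‖x‖ ≤ ‖z • x - Tn n x‖ := by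
      obtain ⟨c, hc, h⟩ := hfin N
      refine ⟨min c (‖z‖ / 2), lt_min hc (by positivity), fun n x => ?_⟩
      rcases lt_or_ge n N with hn | hn
      · exact (mul_le_mul_of_nonneg_right (min_le_left _ _) (norm_nonneg _)).trans (h n hn x)
      · refine (mul_le_mul_of_nonneg_right (min_le_right _ _) (norm_nonneg _)).trans ?_
        have h1 : ‖Tn n x‖ ≤ ‖z‖ / 2 * ‖x‖ := by
          refine ((Tn n).le_opNorm x).trans (mul_le_mul_of_nonneg_right ?_ (norm_nonneg _))
          exact (hnorm n).trans (hN n hn).le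
        have h2 := norm_sub_norm_le (z • x) (Tn n x)
        rw [norm_smul] at h2
        linarith
    apply hz
    show IsUnit _
    rw [ContinuousLinearMap.isUnit_iff_bijective,
        ContinuousLinearMap.bijective_iff_dense_range_and_antilipschitz]
    have happ : ∀ v, (algebraMap ℂ (F →L[ℂ] F) z - G) v = z • v - G v := by
      intro v; simp [Algebra.algebraMap_eq_smul_one]
    have happJ : ∀ n x, (algebraMap ℂ (F →L[ℂ] F) z - G) (J n x) = J n (z • x - Tn n x) := by
      intro n x; rw [happ, hG, map_sub, map_smul]
    constructor
    · rw [← Submodule.dense_iff_topologicalClosure_eq_top]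
      refine hdense.mono ?_
      show Submodule.span ℂ _ ≤ _
      rw [Submodule.span_le]
      intro v hv
      obtain ⟨n, y, rfl⟩ := Set.mem_iUnion.1 hv
      have h1 : IsUnit (algebraMap ℂ (Hn n →L[ℂ] Hn n) z - Tn n) := by
        by_contra h; exact hzn n h
      rw [ContinuousLinearMap.isUnit_iff_bijective] at h1
      obtain ⟨x, hx⟩ := h1.2 y
      refine ⟨J n x, ?_⟩
      have h3 : (algebraMap ℂ (Hn n →L[ℂ] Hn n) z - Tn n) x = z • x - Tn n x := by
        simp [Algebra.algebraMap_eq_smul_one]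
      rw [h3] at hx
      exact (happJ n x).trans (by rw [hx])
    · refine ⟨Real.toNNReal c⁻¹, ContinuousLinearMap.antilipschitz_of_bound _ fun v => ?_⟩
      rw [Real.coe_toNNReal _ (by positivity), inv_mul_eq_div, le_div_iff₀ hc, mul_comm]
      refine hdense.induction (P := fun v => c * ‖v‖ ≤ ‖(algebraMap ℂ (F →L[ℂ] F) z - G) v‖)
        ?_ (isClosed_le (by fun_prop) (by fun_prop)) v
      intro v hv
      have hof : OrthogonalFamily ℂ Hn J := fun n m hnm x y => horth n m hnm x y
      have hv' : v ∈ ⨆ n, (J n).toLinearMap.range := by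
        have : Submodule.span ℂ (⋃ n : ℕ, Set.range (J n)) ≤ ⨆ n, (J n).toLinearMap.range := by
          rw [Submodule.span_le]
          intro w hw
          obtain ⟨n, y, rfl⟩ := Set.mem_iUnion.1 hw
          exact Submodule.mem_iSup_of_mem n ⟨y, rfl⟩
        exact this hv
      rw [Submodule.mem_iSup_iff_exists_finsupp] at hv'
      obtain ⟨f, hf, rfl⟩ := hv'
      choose l hl using hf
      have e1 : (f.sum fun _ xi => xi) = ∑ i ∈ f.support, J i (l i) :=
        Finset.sum_congr rfl fun i _ => (hl i).symm
      rw [e1, map_sum]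
      simp_rw [happJ]
      refine le_of_sq_le_sq ?_ (norm_nonneg _)
      rw [mul_pow, hof.norm_sum, hof.norm_sum, Finset.mul_sum]
      refine Finset.sum_le_sum fun i _ => ?_
      rw [← mul_pow]
      exact pow_le_pow_left₀ (by positivity) (hall i (l i)) 2
  · refine Set.union_subset ?_ (closure_minimal ?_ (spectrum.isClosed G))
    · rw [Set.singleton_subset_iff]
      apply hsub 0
      have hne : (tp 0).emb 0 ≠ 0 := by
        intro h
        have := (tp 0).inner_emb 0 0
        rw [h] at this
        simp at this
      have : Nontrivial (Hn 0) := ⟨_, _, hne⟩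
      rw [hT0, spectrum.one_eq]
      rfl
    · refine Set.iUnion_subset fun n => ?_
      rintro z ⟨l, hl, rfl⟩
      apply hsub (n + 1)
      rw [hTM]
      exact prod_mem_spec _ T l hl
end

section
/- Let H be a nonzero complex Hilbert space and T a bounded operator on H with ‖T‖ < 1. Then the spectra of the symmetric second quantization Γ^⊙(T) on the symmetric Fock space and of the second quantization Γ(T) on the full Fock space coincide, and both equal {1} ∪ closure( ⋃_{n≥1} { Π_{j=1}^n λ_j : λ_j ∈ σ(T) } ). -/
open scoped InnerProductSpace

/-- The symmetric subspace `H^{⊙n}` of the Hilbert tensor power `H^{⊗n}`: the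
closed subspace spanned by the symmetric tensors `Σ_{σ ∈ Sₙ} x_{σ(1)} ⊗ ⋯ ⊗ x_{σ(n)}`. -/
def symSubspace {H Hn : Type*} [NormedAddCommGroup H] [InnerProductSpace ℂ H]
    [NormedAddCommGroup Hn] [InnerProductSpace ℂ Hn] {n : ℕ}
    (tp : TensorPowerStructure H Hn n) : Submodule ℂ Hn :=
  (Submodule.span ℂ
    {y : Hn | ∃ x : Fin n → H,
      y = ∑ σ : Equiv.Perm (Fin n), tp.emb (x ∘ σ)}).topologicalClosure


theorem aux_comm_prod {A : Type*} [NormedRing A] [NormedAlgebra ℂ A] [CompleteSpace A]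
    {n : ℕ} (a : Fin n → A) (hc : ∀ i j, a i * a j = a j * a i) {z : ℂ}
    (hz : z ∈ spectrum ℂ (List.ofFn a).prod) :
    ∃ l : Fin n → ℂ, (∀ j, l j ∈ spectrum ℂ (a j)) ∧ z = ∏ j, l j := by
  set S : Set A := Set.range a
  set B : Subalgebra ℂ A := Subalgebra.centralizer ℂ (Subalgebra.centralizer ℂ S : Set A) with hB
  have hcomm : ∀ x ∈ S, ∀ y ∈ S, x * y = y * x := by
    rintro _ ⟨i, rfl⟩ _ ⟨j, rfl⟩; exact hc i j
  have hBcomm : ∀ x y : B, x * y = y * x := by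
    intro x y
    apply Subtype.ext
    exact Set.centralizer_centralizer_comm_of_comm hcomm x.1 x.2 y.1 y.2
  have hclosed : IsClosed (B : Set A) := by
    have : (B : Set A) = Set.centralizer (Subalgebra.centralizer ℂ S : Set A) := rfl
    rw [this]
    exact Set.isClosed_centralizer _
  let _ : NormedCommRing B := { (inferInstance : NormedRing B) with mul_comm := hBcomm }
  have : CompleteSpace B := hclosed.completeSpace_coe
  have hmem : ∀ i, a i ∈ B := fun i => Set.subset_centralizer_centralizer ⟨i, rfl⟩
  let b : Fin n → B := fun i => ⟨a i, hmem i⟩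
  have hprod : ((∏ i, b i : B) : A) = (List.ofFn a).prod := by
    rw [← List.prod_ofFn]
    have := map_list_prod B.val (List.ofFn b)
    simp only [List.map_ofFn] at this
    exact this
  have hz' : z ∈ spectrum ℂ (∏ i, b i : B) := by
    rw [← hprod] at hz
    exact spectrum.subset_subalgebra (∏ i, b i : B) hz
  obtain ⟨f, hf⟩ := WeakDual.CharacterSpace.mem_spectrum_iff_exists.1 hz'
  refine ⟨fun j => f (b j), fun j => ?_, ?_⟩
  · have h1 : f (b j) ∈ spectrum ℂ (b j) := AlgHom.apply_mem_spectrum f (b j)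
    intro hu
    apply h1
    obtain ⟨u, hu⟩ := hu
    have hinv : (↑u⁻¹ : A) ∈ B := by
      intro y hy
      have : Commute y (a j) := (hmem j) y hy
      have : Commute y (u : A) := by
        rw [hu]; exact (Algebra.commute_algebraMap_right _ _).sub_right this
      exact this.units_inv_right
    refine ⟨⟨(algebraMap ℂ B (f (b j)) - b j), ⟨_, hinv⟩, ?_, ?_⟩, rfl⟩
    · apply Subtype.ext
      change (algebraMap ℂ A (f (b j)) - a j) * ↑u⁻¹ = 1
      rw [← hu]; simp
    · apply Subtype.ext
      change ↑u⁻¹ * (algebraMap ℂ A (f (b j)) - a j) = 1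
      rw [← hu]; simp
  · rw [← hf, map_prod]

/-- approximate point spectrum -/
def aps {H : Type*} [NormedAddCommGroup H] [InnerProductSpace ℂ H] (T : H →L[ℂ] H) : Set ℂ :=
  {z | ∀ ε > 0, ∃ x : H, ‖x‖ = 1 ∧ ‖T x - z • x‖ < ε}

section
variable {H : Type*} [NormedAddCommGroup H] [InnerProductSpace ℂ H]

theorem not_mem_aps {T : H →L[ℂ] H} {z : ℂ} (h : z ∉ aps T) :
    ∃ ε > 0, ∀ x, ε * ‖x‖ ≤ ‖T x - z • x‖ := by
  simp only [aps, Set.mem_ofPred_eq, not_forall, not_exists, not_and, not_lt] at h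
  obtain ⟨ε, hε, h⟩ := h
  refine ⟨ε, hε, fun x => ?_⟩
  by_cases hx : x = 0
  · simp [hx]
  have hn : 0 < ‖x‖ := norm_pos_iff.2 hx
  have h2 := h ((‖x‖⁻¹ : ℂ) • x) (by rw [norm_smul]; simp [hn.ne'])
  rw [map_smul, smul_comm z, ← smul_sub, norm_smul] at h2
  simp only [norm_inv, Complex.norm_real, norm_norm] at h2
  rw [inv_mul_eq_div, le_div_iff₀ hn] at h2
  exact h2

theorem mem_aps_of_not {T : H →L[ℂ] H} {z : ℂ} (h : z ∈ aps T) {ε : ℝ} (hε : 0 < ε)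
    (hb : ∀ x, ε * ‖x‖ ≤ ‖T x - z • x‖) : False := by
  obtain ⟨x, hx, h1⟩ := h ε hε
  have := hb x
  rw [hx] at this; linarith

theorem isClosed_aps (T : H →L[ℂ] H) : IsClosed (aps T) := by
  rw [← isOpen_compl_iff, Metric.isOpen_iff]
  intro z hz
  obtain ⟨ε, hε, hb⟩ := not_mem_aps hz
  refine ⟨ε / 2, by positivity, fun w hw hw' => ?_⟩
  refine mem_aps_of_not hw' (half_pos hε) fun x => ?_
  rw [Metric.mem_ball, dist_eq_norm] at hw
  have h1 := hb x
  have h2 : T x - z • x = (T x - w • x) + (w - z) • x := by rw [sub_smul]; abel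
  have h3 := norm_add_le (T x - w • x) ((w - z) • x)
  rw [← h2, norm_smul] at h3
  have : ‖w - z‖ * ‖x‖ ≤ ε / 2 * ‖x‖ := by gcongr
  linarith

theorem res_apply (T : H →L[ℂ] H) (z : ℂ) (x : H) :
    (algebraMap ℂ (H →L[ℂ] H) z - T) x = z • x - T x := by
  simp [Algebra.algebraMap_eq_smul_one]

theorem aps_subset (T : H →L[ℂ] H) : aps T ⊆ spectrum ℂ T := by
  intro z hz hu
  obtain ⟨u, hu⟩ := hu
  set R : H →L[ℂ] H := ↑u⁻¹
  have h1 : ∀ x, R (z • x - T x) = x := by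
    intro x
    rw [← res_apply, ← hu]
    change ((↑u⁻¹ * ↑u : H →L[ℂ] H)) x = x
    simp
  refine mem_aps_of_not hz (ε := (‖R‖ + 1)⁻¹) (by positivity) fun x => ?_
  rw [inv_mul_le_iff₀ (by positivity), norm_sub_rev]
  calc ‖x‖ = ‖R (z • x - T x)‖ := by rw [h1]
    _ ≤ ‖R‖ * _ := R.le_opNorm _
    _ ≤ _ := by gcongr; linarith

variable [CompleteSpace H]

theorem isUnit_of_bound {T : H →L[ℂ] H} {z : ℂ} {ε : ℝ} (hε : 0 < ε)
    (hb : ∀ x, ε * ‖x‖ ≤ ‖T x - z • x‖)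
    (hd : DenseRange (algebraMap ℂ (H →L[ℂ] H) z - T)) :
    IsUnit (algebraMap ℂ (H →L[ℂ] H) z - T) := by
  rw [ContinuousLinearMap.isUnit_iff_bijective,
    ContinuousLinearMap.bijective_iff_dense_range_and_antilipschitz]
  refine ⟨?_, ⟨ε⁻¹, by positivity⟩, ?_⟩
  · exact (Submodule.dense_iff_topologicalClosure_eq_top).1 hd
  · apply ContinuousLinearMap.antilipschitz_of_bound
    intro x
    rw [res_apply, norm_sub_rev]
    change _ ≤ ε⁻¹ * _
    rw [le_inv_mul_iff₀ hε]
    exact hb x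

open ContinuousLinearMap in
theorem spectrum_adj {T : H →L[ℂ] H} {z : ℂ} :
    star z ∈ spectrum ℂ (adjoint T) ↔ z ∈ spectrum ℂ T := by
  rw [← ContinuousLinearMap.star_eq_adjoint, spectrum.map_star]
  simp

open ContinuousLinearMap in
theorem spectrum_sub (T : H →L[ℂ] H) {z : ℂ} (hz : z ∈ spectrum ℂ T) :
    z ∈ aps T ∨ star z ∈ aps (adjoint T) := by
  by_contra! h
  obtain ⟨h1, h2⟩ := h
  obtain ⟨ε, hε, hb⟩ := not_mem_aps h1
  obtain ⟨δ, hδ, hd⟩ := not_mem_aps h2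
  apply hz
  refine isUnit_of_bound hε hb ?_
  have h3 : (LinearMap.range (algebraMap ℂ (H →L[ℂ] H) z - T).toLinearMap)ᗮ = ⊥ := by
    rw [eq_bot_iff]
    intro y hy
    have h4 : adjoint T y - star z • y = 0 := by
      refine ext_inner_left ℂ fun v => ?_
      rw [inner_sub_right, adjoint_inner_right, inner_smul_right, inner_zero_right]
      have := (Submodule.mem_orthogonal _ _).1 hy _ ⟨v, rfl⟩
      change ⟪(algebraMap ℂ (H →L[ℂ] H) z - T) v, y⟫_ℂ = 0 at this
      rw [res_apply, inner_sub_left, inner_smul_left] at this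
      rw [← neg_eq_zero, neg_sub]; exact this
    have := hd y
    rw [h4, norm_zero] at this
    have : ‖y‖ ≤ 0 := by nlinarith
    simpa using this
  have h5 := Submodule.topologicalClosure_eq_top_iff.2 h3
  have h6 := (Submodule.dense_iff_topologicalClosure_eq_top).2 h5
  exact h6

open ContinuousLinearMap in
/-- points of spectrum outside aps form an open set -/
theorem isOpen_spec_diff (T : H →L[ℂ] H) : IsOpen (spectrum ℂ T \ aps T) := by
  rw [Metric.isOpen_iff]
  rintro z ⟨hz, hz'⟩
  obtain ⟨ε, hε, hb⟩ := not_mem_aps hz'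
  have hball : ∀ w, ‖w - z‖ < ε / 2 → ∀ x, ε / 2 * ‖x‖ ≤ ‖T x - w • x‖ := by
    intro w hw x
    have h1 := hb x
    have h2 : T x - z • x = (T x - w • x) + (w - z) • x := by rw [sub_smul]; abel
    have h3 := norm_add_le (T x - w • x) ((w - z) • x)
    rw [← h2, norm_smul] at h3
    have : ‖w - z‖ * ‖x‖ ≤ ε / 2 * ‖x‖ := by gcongr
    linarith
  refine ⟨ε / 2, by positivity, fun w hw => ?_⟩
  rw [Metric.mem_ball, dist_eq_norm] at hw
  refine ⟨?_, fun h => mem_aps_of_not h (half_pos hε) (hball w hw)⟩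
  by_contra hu
  have hu : IsUnit (algebraMap ℂ (H →L[ℂ] H) w - T) := by simpa [spectrum.mem_iff] using hu
  obtain ⟨u, hu⟩ := hu
  apply hz
  by_cases hnt : Nontrivial H
  swap
  · rw [not_nontrivial_iff_subsingleton] at hnt
    exact isUnit_of_subsingleton _
  have hn : ‖(↑u⁻¹ : H →L[ℂ] H)‖ ≤ (ε / 2)⁻¹ := by
    refine ContinuousLinearMap.opNorm_le_bound _ (by positivity) fun y => ?_
    have h1 : (u : H →L[ℂ] H) ((↑u⁻¹ : H →L[ℂ] H) y) = y := by
      change ((↑u * ↑u⁻¹ : H →L[ℂ] H)) y = y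
      simp
    rw [le_inv_mul_iff₀ (by positivity)]
    refine (hball w hw _).trans ?_
    rw [norm_sub_rev, ← res_apply, ← hu, h1]
  have h0 : 0 < ‖(↑u⁻¹ : H →L[ℂ] H)‖ := Units.norm_pos u⁻¹
  refine ⟨u.ofNearby (algebraMap ℂ (H →L[ℂ] H) z - T) ?_, rfl⟩
  rw [hu, sub_sub_sub_cancel_right, ← map_sub, norm_algebraMap', norm_sub_rev]
  refine hw.trans_le ?_
  rw [le_inv_comm₀ (by positivity) h0]
  exact hn
end

theorem mix_two {a d : Set ℂ} (ha : IsClosed a) (hd : IsClosed d) (hU : IsOpen (d \ a))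
    (hV : IsOpen (a \ d)) (hbd : Bornology.IsBounded d) {x y : ℂ} (hx : x ∈ d) (hy : y ∈ a)
    (hx0 : x ≠ 0) :
    ∃ x' y' : ℂ, x' * y' = x * y ∧ x' ∈ d ∧ y' ∈ a ∧ (x' ∈ a ∨ y' ∈ d) := by
  by_contra! hcon
  let f : ℝ → ℂ := fun r => (Real.exp r : ℂ) * x
  let g : ℝ → ℂ := fun r => (Real.exp (-r) : ℂ) * y
  have hf : Continuous f := by fun_prop
  have hg : Continuous g := by fun_prop
  have hfg : ∀ r, f r * g r = x * y := by
    intro r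
    have : (Real.exp r : ℂ) * (Real.exp (-r) : ℂ) = 1 := by
      rw [← Complex.ofReal_mul, ← Real.exp_add]; simp
    calc f r * g r = ((Real.exp r : ℂ) * (Real.exp (-r) : ℂ)) * (x * y) := by simp only [f, g]; ring
      _ = _ := by rw [this, one_mul]
  let K : Set ℝ := f ⁻¹' d ∩ g ⁻¹' a
  have hK : K = f ⁻¹' (d \ a) ∩ g ⁻¹' (a \ d) := by
    ext r
    constructor
    · rintro ⟨h1, h2⟩
      have := hcon (f r) (g r) (hfg r) h1 h2
      exact ⟨⟨h1, this.1⟩, ⟨h2, this.2⟩⟩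
    · rintro ⟨h1, h2⟩
      exact ⟨h1.1, h2.1⟩
  have hcl : IsClopen K := by
    refine ⟨(hd.preimage hf).inter (ha.preimage hg), ?_⟩
    rw [hK]
    exact (hU.preimage hf).inter (hV.preimage hg)
  have huniv : K = Set.univ := hcl.eq_univ ⟨0, by simpa [K, f] using hx, by simpa [K, g] using hy⟩
  obtain ⟨C, hC⟩ := hbd.exists_norm_le
  have hx' : 0 < ‖x‖ := norm_pos_iff.2 hx0
  have hlim : Filter.Tendsto (fun r : ℝ => Real.exp r * ‖x‖) Filter.atTop Filter.atTop :=
    Real.tendsto_exp_atTop.atTop_mul_const hx'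
  obtain ⟨r, hr⟩ := (hlim.eventually_gt_atTop C).exists
  have hrK : r ∈ K := by rw [huniv]; trivial
  have := hC _ hrK.1
  simp only [f, norm_mul, Complex.norm_real, Real.norm_eq_abs, Real.abs_exp] at this
  linarith

theorem mix_tail {a d : Set ℂ} (ha : IsClosed a) (hd : IsClosed d) (hU : IsOpen (d \ a))
    (hV : IsOpen (a \ d)) (hbd : Bornology.IsBounded d) (L : List ℂ) :
    ∀ x : ℂ, x ∈ d → x ≠ 0 → (∀ y ∈ L, y ∈ a ∧ y ≠ 0) →
    ∃ L' : List ℂ, L'.length = L.length + 1 ∧ L'.prod = x * L.prod ∧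
      ((∀ y ∈ L', y ∈ a) ∨ (∀ y ∈ L', y ∈ d)) := by
  induction L with
  | nil => intro x hx _ _; exact ⟨[x], by simp, by simp, Or.inr (by simpa using hx)⟩
  | cons y L ih =>
    intro x hx hx0 hL
    obtain ⟨hy, hy0⟩ := hL y (by simp)
    obtain ⟨x', y', hxy, hx', hy', h⟩ := mix_two ha hd hU hV hbd hx hy hx0
    rcases h with h | h
    · refine ⟨x' :: y' :: L, by simp, by simp [← mul_assoc, hxy], Or.inl ?_⟩
      intro w hw
      simp only [List.mem_cons] at hw
      rcases hw with rfl | rfl | hw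
      · exact h
      · exact hy'
      · exact (hL w (by simp [hw])).1
    · have hx'0 : x' ≠ 0 := by
        rintro rfl
        rw [zero_mul] at hxy
        exact mul_ne_zero hx0 hy0 hxy.symm
      obtain ⟨L', h1, h2, h3⟩ := ih x' hx' hx'0 (fun w hw => hL w (by simp [hw]))
      refine ⟨y' :: L', by simp [h1], ?_, ?_⟩
      · rw [List.prod_cons, List.prod_cons, h2, ← mul_assoc, ← mul_assoc, ← hxy, mul_comm y']
      · rcases h3 with h3 | h3
        · left; simpa using ⟨hy', h3⟩
        · right; simpa using ⟨h, h3⟩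

theorem mix_all {a d : Set ℂ} (ha : IsClosed a) (hd : IsClosed d) (hU : IsOpen (d \ a))
    (hV : IsOpen (a \ d)) (hbda : Bornology.IsBounded a) (hbd : Bornology.IsBounded d)
    (L : List ℂ) (hL : ∀ y ∈ L, (y ∈ a ∨ y ∈ d) ∧ y ≠ 0) :
    ∃ L' : List ℂ, L'.length = L.length ∧ L'.prod = L.prod ∧
      ((∀ y ∈ L', y ∈ a) ∨ (∀ y ∈ L', y ∈ d)) := by
  induction L with
  | nil => exact ⟨[], rfl, rfl, Or.inl (by simp)⟩
  | cons x L ih =>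
    obtain ⟨L', h1, h2, h3⟩ := ih (fun w hw => hL w (by simp [hw]))
    obtain ⟨hx, hx0⟩ := hL x (by simp)
    have hL0 : ∀ y ∈ L', y ≠ 0 := by
      rintro y hy rfl
      have : L.prod = 0 := by rw [← h2]; exact List.prod_eq_zero hy
      rw [List.prod_eq_zero_iff] at this
      exact (hL 0 (by simp [this])).2 rfl
    rcases h3 with h3 | h3
    · rcases hx with hx | hx
      · exact ⟨x :: L', by simp [h1], by simp [h2], Or.inl (by simpa using ⟨hx, h3⟩)⟩
      · obtain ⟨M, e1, e2, e3⟩ := mix_tail ha hd hU hV hbd L' x hx hx0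
          (fun y hy => ⟨h3 y hy, hL0 y hy⟩)
        exact ⟨M, by simp [e1, h1], by simp [e2, h2], e3⟩
    · rcases hx with hx | hx
      · obtain ⟨M, e1, e2, e3⟩ := mix_tail hd ha hV hU hbda L' x hx hx0
          (fun y hy => ⟨h3 y hy, hL0 y hy⟩)
        exact ⟨M, by simp [e1, h1], by simp [e2, h2], e3.symm⟩
      · exact ⟨x :: L', by simp [h1], by simp [h2], Or.inr (by simpa using ⟨hx, h3⟩)⟩

/-- a vector having large inner product with all given unit vectors -/
theorem exists_test_vector (H : Type*) [NormedAddCommGroup H] [InnerProductSpace ℂ H] (n : ℕ) :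
    ∃ c > (0 : ℝ), ∃ C : ℝ, 0 < C ∧ ∀ x : Fin n → H, (∀ i, ‖x i‖ = 1) →
      ∃ y : H, ‖y‖ ≤ C ∧ ∀ i, c ≤ ‖⟪y, x i⟫_ℂ‖ := by
  induction n with
  | zero => exact ⟨1, one_pos, 1, one_pos, fun x _ => ⟨0, by simp, fun i => i.elim0⟩⟩
  | succ n ih =>
    obtain ⟨c, hc, C, hC, h⟩ := ih
    refine ⟨c / 4, by positivity, C + c / 2, by positivity, fun x hx => ?_⟩
    obtain ⟨y, hy, hyx⟩ := h (fun i => x i.succ) (fun i => hx _)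
    by_cases h0 : c / 4 ≤ ‖⟪y, x 0⟫_ℂ‖
    · refine ⟨y, by linarith, fun i => ?_⟩
      refine Fin.cases h0 (fun i => ?_) i
      have := hyx i
      linarith
    · push Not at h0
      refine ⟨y + ((c / 2 : ℝ) : ℂ) • x 0, ?_, fun i => ?_⟩
      · refine (norm_add_le _ _).trans ?_
        rw [norm_smul, hx, Complex.norm_real, Real.norm_of_nonneg (by positivity)]
        linarith
      · rw [inner_add_left, inner_smul_left, Complex.conj_ofReal]
        refine Fin.cases ?_ (fun i => ?_) i
        · have h1 : ⟪x 0, x 0⟫_ℂ = 1 := by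
            rw [inner_self_eq_norm_sq_to_K, hx]; simp
          rw [h1, mul_one]
          have h2 := norm_sub_norm_le (((c / 2 : ℝ) : ℂ)) (-⟪y, x 0⟫_ℂ)
          rw [sub_neg_eq_add, norm_neg, Complex.norm_real,
            Real.norm_of_nonneg (by positivity)] at h2
          have h3 : ‖⟪y, x 0⟫_ℂ + ((c / 2 : ℝ) : ℂ)‖ = ‖((c / 2 : ℝ) : ℂ) + ⟪y, x 0⟫_ℂ‖ := by
            rw [add_comm]
          linarith
        · have h1 := norm_inner_le_norm (𝕜 := ℂ) (x 0) (x i.succ)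
          rw [hx, hx, mul_one] at h1
          have h2 : ‖((c / 2 : ℝ) : ℂ) * ⟪x 0, x i.succ⟫_ℂ‖ ≤ c / 2 := by
            rw [norm_mul, Complex.norm_real, Real.norm_of_nonneg (by positivity)]
            nlinarith
          have h3 := norm_sub_norm_le (⟪y, x i.succ⟫_ℂ) (-(((c / 2 : ℝ) : ℂ) * ⟪x 0, x i.succ⟫_ℂ))
          rw [sub_neg_eq_add, norm_neg] at h3
          have := hyx i
          linarith

section
open ContinuousLinearMap

/-- restriction to a reducing subspace -/
theorem spectrum_reduce {E F : Type*} [NormedAddCommGroup E] [InnerProductSpace ℂ E]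
    [CompleteSpace E] [NormedAddCommGroup F] [InnerProductSpace ℂ F] [CompleteSpace F]
    (J : E →ₗᵢ[ℂ] F) (A : E →L[ℂ] E) (G : F →L[ℂ] F) (h1 : ∀ x, G (J x) = J (A x))
    (h2 : ∀ x y, ⟪J x, G y⟫_ℂ = ⟪J (adjoint A x), y⟫_ℂ) :
    spectrum ℂ A ⊆ spectrum ℂ G := by
  intro z hz hu
  apply hz
  obtain ⟨u, hu⟩ := hu
  set R : F →L[ℂ] F := ↑u⁻¹
  let j : E →L[ℂ] F := J.toContinuousLinearMap
  have hj : ∀ x, j x = J x := fun x => rfl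
  have hRl : ∀ x, R (z • x - G x) = x := by
    intro x
    rw [← res_apply, ← hu]
    change ((↑u⁻¹ * ↑u : F →L[ℂ] F)) x = x
    simp
  have hRr : ∀ x, z • R x - G (R x) = x := by
    intro x
    rw [← res_apply, ← hu]
    change ((↑u * ↑u⁻¹ : F →L[ℂ] F)) x = x
    simp
  have hjj : ∀ x, adjoint j (j x) = x := by
    intro x
    refine ext_inner_left ℂ fun v => ?_
    rw [adjoint_inner_right, hj, hj, J.inner_map_map]
  have hjG : ∀ y, A (adjoint j y) = adjoint j (G y) := by
    intro y
    refine ext_inner_left ℂ fun v => ?_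
    rw [adjoint_inner_right, hj, h2, ← hj, ← adjoint_inner_right, adjoint_inner_left]
  refine ⟨⟨algebraMap ℂ (E →L[ℂ] E) z - A, (adjoint j).comp (R.comp j), ?_, ?_⟩, rfl⟩
  · ext x
    change (algebraMap ℂ (E →L[ℂ] E) z - A) (adjoint j (R (j x))) = x
    rw [res_apply, hjG, ← map_smul, ← map_sub, hRr, hjj]
  · ext x
    change adjoint j (R (j ((algebraMap ℂ (E →L[ℂ] E) z - A) x))) = x
    rw [res_apply, map_sub, map_smul, hj (A x), ← h1, ← hj, hRl, hjj]

theorem fock_spectrum {F : Type*} [NormedAddCommGroup F] [InnerProductSpace ℂ F] [CompleteSpace F]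
    (E : ℕ → Type*) [∀ n, NormedAddCommGroup (E n)] [∀ n, InnerProductSpace ℂ (E n)]
    [∀ n, CompleteSpace (E n)] (J : ∀ n, E n →ₗᵢ[ℂ] F)
    (horth : ∀ n m, n ≠ m → ∀ (x : E n) (y : E m), ⟪J n x, J m y⟫_ℂ = 0)
    (hdense : Dense ((Submodule.span ℂ
      (⋃ n : ℕ, Set.range (J n)) : Submodule ℂ F) : Set F))
    (A : ∀ n, E n →L[ℂ] E n) (G : F →L[ℂ] F) (hG : ∀ (n : ℕ) (x : E n), G (J n x) = J n (A n x))
    (q : ℝ) (hq0 : 0 ≤ q) (hq : q < 1) (hA : ∀ n x, ‖A n x‖ ≤ q ^ n * ‖x‖) :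
    (∀ n, spectrum ℂ (A n) ⊆ spectrum ℂ G) ∧
    (∀ z ∈ spectrum ℂ G, z ≠ 0 → ∃ n, z ∈ spectrum ℂ (A n)) := by
  classical
  constructor
  · intro n
    refine spectrum_reduce (J n) (A n) G (hG n) fun x y => ?_
    have hcl : IsClosed {y : F | ⟪J n x, G y⟫_ℂ = ⟪J n (adjoint (A n) x), y⟫_ℂ} :=
      isClosed_eq (by fun_prop) (by fun_prop)
    refine hdense.induction (P := fun y => ⟪J n x, G y⟫_ℂ = ⟪J n (adjoint (A n) x), y⟫_ℂ)
      ?_ hcl y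
    intro y hy
    refine Submodule.span_induction ?_ ?_ ?_ ?_ hy
    · intro w hw
      obtain ⟨m, v, rfl⟩ := Set.mem_iUnion.1 hw
      rw [hG]
      by_cases h : n = m
      · subst h
        rw [(J n).inner_map_map, (J n).inner_map_map, adjoint_inner_left]
      · rw [horth n m h, horth n m h]
    · simp
    · intro a b _ _ ha hb
      rw [map_add, inner_add_right, inner_add_right, ha, hb]
    · intro c a _ ha
      rw [map_smul, inner_smul_right, inner_smul_right, ha]
  · intro z hz hz0
    by_contra! hcon
    apply hz
    have hu : ∀ n, IsUnit (algebraMap ℂ (E n →L[ℂ] E n) z - A n) := by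
      intro n; simpa [spectrum.mem_iff] using hcon n
    have hzn : 0 < ‖z‖ := norm_pos_iff.2 hz0
    -- individual bounds
    have hb : ∀ n, ∃ ε > 0, ∀ x, ε * ‖x‖ ≤ ‖A n x - z • x‖ := by
      intro n
      exact not_mem_aps (fun h => hcon n (aps_subset _ h))
    choose ε hε hb using hb
    obtain ⟨N, hN⟩ : ∃ N, q ^ N < ‖z‖ / 2 := exists_pow_lt_of_lt_one (by positivity) hq
    obtain ⟨δ, hδ, hδb⟩ : ∃ δ > 0, ∀ n, ∀ x, δ * ‖x‖ ≤ ‖A n x - z • x‖ := by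
      obtain ⟨δ, hδ, hδ'⟩ : ∃ δ > 0, ∀ n ∈ Finset.range N, δ ≤ ε n := by
        generalize Finset.range N = s
        induction s using Finset.induction_on with
        | empty => exact ⟨1, one_pos, by simp⟩
        | insert a s _ ih =>
          obtain ⟨δ, hδ, h⟩ := ih
          refine ⟨min δ (ε a), lt_min hδ (hε a), ?_⟩
          intro n hn
          rcases Finset.mem_insert.1 hn with rfl | hn
          · exact min_le_right _ _
          · exact (min_le_left _ _).trans (h n hn)
      refine ⟨min δ (‖z‖ / 2), lt_min hδ (by positivity), fun n x => ?_⟩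
      by_cases hn : n < N
      · calc _ ≤ ε n * ‖x‖ := by
              gcongr; exact (min_le_left _ _).trans (hδ' n (by simpa using hn))
          _ ≤ _ := hb n x
      · have h1 : q ^ n ≤ q ^ N := pow_le_pow_of_le_one hq0 hq.le (not_lt.1 hn)
        have h2 := norm_sub_norm_le (z • x) (A n x)
        rw [norm_sub_rev, norm_smul] at h2
        have h3 := hA n x
        have h4 : q ^ n * ‖x‖ ≤ ‖z‖ / 2 * ‖x‖ := by gcongr; linarith
        have h5 : min δ (‖z‖ / 2) * ‖x‖ ≤ ‖z‖ / 2 * ‖x‖ := by gcongr; exact min_le_right _ _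
        linarith
    have hO : OrthogonalFamily ℂ E J := fun n m h x y => horth n m h x y
    -- elements of span are finite sums
    have hspan : ∀ y ∈ Submodule.span ℂ (⋃ n : ℕ, Set.range (J n)),
        ∃ (s : Finset ℕ) (v : ∀ n, E n), y = ∑ n ∈ s, J n (v n) := by
      intro y hy
      have : Submodule.span ℂ (⋃ n : ℕ, Set.range (J n)) =
          ⨆ n, LinearMap.range (J n).toLinearMap := by
        rw [Submodule.span_iUnion]
        congr 1; ext n : 1
        exact Submodule.span_eq (LinearMap.range (J n).toLinearMap)
      rw [this] at hy
      obtain ⟨f, hf, hfy⟩ := (Submodule.mem_iSup_iff_exists_finsupp _ _).1 hy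
      choose v hv using hf
      refine ⟨f.support, v, ?_⟩
      rw [← hfy, Finsupp.sum]
      exact Finset.sum_congr rfl fun n _ => (hv n).symm
    refine isUnit_of_bound hδ ?_ ?_
    · intro x
      have hcl : IsClosed {x : F | δ * ‖x‖ ≤ ‖G x - z • x‖} :=
        isClosed_le (by fun_prop) (by fun_prop)
      refine hdense.induction (P := fun x => δ * ‖x‖ ≤ ‖G x - z • x‖) ?_ hcl x
      intro y hy
      obtain ⟨s, v, rfl⟩ := hspan y hy
      have h1 : G (∑ n ∈ s, J n (v n)) - z • ∑ n ∈ s, J n (v n) =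
          ∑ n ∈ s, J n (A n (v n) - z • v n) := by
        rw [map_sum, Finset.smul_sum, ← Finset.sum_sub_distrib]
        refine Finset.sum_congr rfl fun n _ => ?_
        rw [hG, map_sub, map_smul]
      rw [h1]
      refine le_of_sq_le_sq ?_ (norm_nonneg _)
      rw [mul_pow, hO.norm_sum, hO.norm_sum, Finset.mul_sum]
      refine Finset.sum_le_sum fun n _ => ?_
      rw [← mul_pow]
      exact pow_le_pow_left₀ (by positivity) (hδb n _) 2
    · have hsub : ((Submodule.span ℂ (⋃ n : ℕ, Set.range (J n)) : Submodule ℂ F) : Set F) ⊆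
          Set.range (algebraMap ℂ (F →L[ℂ] F) z - G) := by
        have : Submodule.span ℂ (⋃ n : ℕ, Set.range (J n)) ≤
            LinearMap.range (algebraMap ℂ (F →L[ℂ] F) z - G).toLinearMap := by
          rw [Submodule.span_le]
          intro w hw
          obtain ⟨m, v, rfl⟩ := Set.mem_iUnion.1 hw
          obtain ⟨v', hv'⟩ := (ContinuousLinearMap.isUnit_iff_bijective.1 (hu m)).2 v
          refine ⟨J m v', ?_⟩
          change (algebraMap ℂ (F →L[ℂ] F) z - G) (J m v') = _
          rw [res_apply, hG, ← hv', res_apply, map_sub, map_smul]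
        exact this
      exact hdense.mono hsub
end

section
open ContinuousLinearMap
variable {H Hn : Type*} [NormedAddCommGroup H] [InnerProductSpace ℂ H]
  [NormedAddCommGroup Hn] [InnerProductSpace ℂ Hn] {n : ℕ} (tp : TensorPowerStructure H Hn n)

theorem tp_ext {v w : Hn} (h : ∀ x, ⟪v, tp.emb x⟫_ℂ = ⟪w, tp.emb x⟫_ℂ) : v = w := by
  refine tp.dense_span.eq_of_inner_left ℂ fun y hy => ?_
  refine Submodule.span_induction ?_ ?_ ?_ ?_ hy
  · rintro _ ⟨x, rfl⟩; exact h x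
  · simp
  · intro a b _ _ ha hb
    rw [inner_add_right, inner_add_right, ha, hb]
  · intro c a _ ha
    rw [inner_smul_right, inner_smul_right, ha]

theorem op_ext {A B : Hn →L[ℂ] Hn} (h : ∀ x, A (tp.emb x) = B (tp.emb x)) : A = B := by
  refine ContinuousLinearMap.ext_on tp.dense_span ?_
  rintro _ ⟨x, rfl⟩; exact h x

theorem prod_upd (i : Fin n) (x y : Fin n → H) (a b : H) :
    ∏ j, ⟪Function.update x i a j, Function.update y i b j⟫_ℂ =
      ⟪a, b⟫_ℂ * ∏ j ∈ Finset.univ.erase i, ⟪x j, y j⟫_ℂ := by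
  rw [← Finset.mul_prod_erase _ _ (Finset.mem_univ i)]
  congr 1
  · simp
  · refine Finset.prod_congr rfl fun j hj => ?_
    have := Finset.ne_of_mem_erase hj
    simp [this]

theorem prod_upd_right (i : Fin n) (x y : Fin n → H) (b : H) :
    ∏ j, ⟪x j, Function.update y i b j⟫_ℂ =
      ⟪x i, b⟫_ℂ * ∏ j ∈ Finset.univ.erase i, ⟪x j, y j⟫_ℂ := by
  have := prod_upd i x y (x i) b
  rwa [Function.update_eq_self] at this

theorem prod_upd_left (i : Fin n) (x y : Fin n → H) (a : H) :
    ∏ j, ⟪Function.update x i a j, y j⟫_ℂ =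
      ⟪a, y i⟫_ℂ * ∏ j ∈ Finset.univ.erase i, ⟪x j, y j⟫_ℂ := by
  have := prod_upd i x y a (y i)
  rwa [Function.update_eq_self] at this

theorem emb_add (i : Fin n) (x : Fin n → H) (a b : H) :
    tp.emb (Function.update x i (a + b)) =
      tp.emb (Function.update x i a) + tp.emb (Function.update x i b) := by
  refine tp_ext tp fun y => ?_
  rw [inner_add_left, tp.inner_emb, tp.inner_emb, tp.inner_emb, prod_upd_left, prod_upd_left,
    prod_upd_left, inner_add_left, add_mul]

theorem emb_smul (i : Fin n) (x : Fin n → H) (c : ℂ) (a : H) :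
    tp.emb (Function.update x i (c • a)) = c • tp.emb (Function.update x i a) := by
  refine tp_ext tp fun y => ?_
  rw [inner_smul_left, tp.inner_emb, tp.inner_emb, prod_upd_left, prod_upd_left,
    inner_smul_left, mul_assoc]

theorem emb_smul_all (x : Fin n → H) (c : Fin n → ℂ) :
    tp.emb (fun i => c i • x i) = (∏ i, c i) • tp.emb x := by
  refine tp_ext tp fun y => ?_
  rw [inner_smul_left, tp.inner_emb, tp.inner_emb, map_prod, ← Finset.prod_mul_distrib]
  refine Finset.prod_congr rfl fun i _ => ?_
  rw [inner_smul_left]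

theorem inner_lc (f : (Fin n → H) → (Fin n → H)) (c : (Fin n → H) →₀ ℂ) :
    ⟪Finsupp.linearCombination ℂ (fun x => tp.emb (f x)) c,
      Finsupp.linearCombination ℂ (fun x => tp.emb (f x)) c⟫_ℂ =
    ∑ x ∈ c.support, ∑ y ∈ c.support,
      star (c x) * c y * ∏ j, ⟪f x j, f y j⟫_ℂ := by
  rw [Finsupp.linearCombination_apply, Finsupp.sum, sum_inner]
  refine Finset.sum_congr rfl fun x _ => ?_
  rw [inner_sum]
  refine Finset.sum_congr rfl fun y _ => ?_
  rw [inner_smul_left, inner_smul_right, tp.inner_emb, ← mul_assoc]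
  rfl

variable [CompleteSpace H] [CompleteSpace Hn]

theorem exists_defect (S : H →L[ℂ] H) : ∃ R : H →L[ℂ] H, ∀ x y,
    ⟪S x, S y⟫_ℂ + ⟪R x, R y⟫_ℂ = ((‖S‖ ^ 2 : ℝ) : ℂ) * ⟪x, y⟫_ℂ := by
  have h := CStarAlgebra.star_mul_le_algebraMap_norm_sq (a := S)
  rw [← sub_nonneg, CStarAlgebra.nonneg_iff_eq_star_mul_self] at h
  obtain ⟨R, hR⟩ := h
  refine ⟨R, fun x y => ?_⟩
  have h1 : ⟪S x, S y⟫_ℂ = ⟪x, (star S * S) y⟫_ℂ := by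
    rw [star_eq_adjoint]; simp [adjoint_inner_right]
  have h2 : ⟪R x, R y⟫_ℂ = ⟪x, (star R * R) y⟫_ℂ := by
    rw [star_eq_adjoint]; simp [adjoint_inner_right]
  rw [h1, h2, ← hR, ← inner_add_right, sub_apply, add_sub_cancel, Algebra.algebraMap_eq_smul_one]
  simp [inner_smul_right_eq_smul]

theorem exists_lift (i : Fin n) (S : H →L[ℂ] H) : ∃ S' : Hn →L[ℂ] Hn, ‖S'‖ ≤ ‖S‖ ∧
    ∀ x, S' (tp.emb x) = tp.emb (Function.update x i (S (x i))) := by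
  obtain ⟨R, hR⟩ := exists_defect S
  let f : (H →L[ℂ] H) → (Fin n → H) → (Fin n → H) := fun S x => Function.update x i (S (x i))
  let L := Finsupp.linearCombination ℂ tp.emb
  let LS : (H →L[ℂ] H) → ((Fin n → H) →₀ ℂ) →ₗ[ℂ] Hn :=
    fun S => Finsupp.linearCombination ℂ (fun x => tp.emb (f S x))
  have hkey : ∀ c, ⟪LS S c, LS S c⟫_ℂ + ⟪LS R c, LS R c⟫_ℂ =
      ((‖S‖ ^ 2 : ℝ) : ℂ) * ⟪L c, L c⟫_ℂ := by
    intro c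
    have e := inner_lc tp (fun x => x) c
    have e' : ⟪L c, L c⟫_ℂ = _ := e
    rw [e', inner_lc, inner_lc, ← Finset.sum_add_distrib, Finset.mul_sum]
    refine Finset.sum_congr rfl fun x _ => ?_
    rw [← Finset.sum_add_distrib, Finset.mul_sum]
    refine Finset.sum_congr rfl fun y _ => ?_
    simp only [f]
    rw [prod_upd, prod_upd, ← Finset.mul_prod_erase _ _ (Finset.mem_univ i)]
    linear_combination (star (c x) * c y * ∏ j ∈ Finset.univ.erase i, ⟪x j, y j⟫_ℂ) * hR (x i) (y i)
  have hb : ∀ c, ‖LS S c‖ ≤ ‖S‖ * ‖L c‖ := by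
    intro c
    refine le_of_sq_le_sq ?_ (by positivity)
    have h := hkey c
    rw [inner_self_eq_norm_sq_to_K, inner_self_eq_norm_sq_to_K, inner_self_eq_norm_sq_to_K] at h
    have h' : ‖LS S c‖ ^ 2 + ‖LS R c‖ ^ 2 = ‖S‖ ^ 2 * ‖L c‖ ^ 2 := by
      apply Complex.ofReal_injective
      rw [Complex.ofReal_add, Complex.ofReal_mul, Complex.ofReal_pow ‖LS S c‖,
        Complex.ofReal_pow ‖LS R c‖, Complex.ofReal_pow ‖L c‖]
      exact h
    rw [mul_pow, ← h']
    nlinarith [sq_nonneg ‖LS R c‖]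
  have hd : DenseRange L := by
    have := tp.dense_span
    rw [← Finsupp.range_linearCombination] at this
    exact this
  refine ⟨(LS S).extendOfNorm L, LinearMap.opNorm_extendOfNorm_le hd (norm_nonneg _) hb, ?_⟩
  intro x
  have h1 : L (Finsupp.single x 1) = tp.emb x := by simp [L]
  have h2 : LS S (Finsupp.single x 1) = tp.emb (f S x) := by simp [LS]
  have := LinearMap.extendOfNorm_eq hd ⟨_, hb⟩ (Finsupp.single x 1)
  rwa [h1, h2] at this

noncomputable def lft (i : Fin n) (S : H →L[ℂ] H) : Hn →L[ℂ] Hn := (exists_lift tp i S).choose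

theorem lft_norm (i : Fin n) (S : H →L[ℂ] H) : ‖lft tp i S‖ ≤ ‖S‖ :=
  (exists_lift tp i S).choose_spec.1

theorem lft_emb (i : Fin n) (S : H →L[ℂ] H) (x : Fin n → H) :
    lft tp i S (tp.emb x) = tp.emb (Function.update x i (S (x i))) :=
  (exists_lift tp i S).choose_spec.2 x

theorem lft_mul (i : Fin n) (S R : H →L[ℂ] H) : lft tp i (S * R) = lft tp i S * lft tp i R := by
  refine op_ext tp fun x => ?_
  change _ = lft tp i S (lft tp i R (tp.emb x))
  rw [lft_emb, lft_emb, lft_emb]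
  simp

theorem lft_one (i : Fin n) : lft tp i (1 : H →L[ℂ] H) = 1 := by
  refine op_ext tp fun x => ?_
  rw [lft_emb]; simp

theorem lft_add (i : Fin n) (S R : H →L[ℂ] H) : lft tp i (S + R) = lft tp i S + lft tp i R := by
  refine op_ext tp fun x => ?_
  rw [add_apply, lft_emb, lft_emb, lft_emb, add_apply, emb_add]

theorem lft_smul (i : Fin n) (c : ℂ) (S : H →L[ℂ] H) : lft tp i (c • S) = c • lft tp i S := by
  refine op_ext tp fun x => ?_
  rw [smul_apply, lft_emb, lft_emb, smul_apply, emb_smul]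

theorem lft_spectrum (i : Fin n) (S : H →L[ℂ] H) : spectrum ℂ (lft tp i S) ⊆ spectrum ℂ S := by
  let φ : (H →L[ℂ] H) →ₐ[ℂ] (Hn →L[ℂ] Hn) :=
    AlgHom.ofLinearMap
      { toFun := lft tp i, map_add' := lft_add tp i, map_smul' := lft_smul tp i }
      (lft_one tp i) (lft_mul tp i)
  exact AlgHom.spectrum_apply_subset φ S

theorem lft_comm (i j : Fin n) (S : H →L[ℂ] H) :
    lft tp i S * lft tp j S = lft tp j S * lft tp i S := by
  by_cases h : i = j
  · rw [h]
  refine op_ext tp fun x => ?_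
  change lft tp i S (lft tp j S (tp.emb x)) = lft tp j S (lft tp i S (tp.emb x))
  rw [lft_emb, lft_emb, lft_emb, lft_emb, Function.update_of_ne h, Function.update_of_ne (Ne.symm h),
    Function.update_comm h]

theorem lft_list (S : H →L[ℂ] H) (L : List (Fin n)) (hL : L.Nodup) (x : Fin n → H) :
    (L.map (fun i => lft tp i S)).prod (tp.emb x) =
      tp.emb (fun j => if j ∈ L then S (x j) else x j) := by
  induction L with
  | nil => simp
  | cons i L ih =>
    rw [List.nodup_cons] at hL
    rw [List.map_cons, List.prod_cons]
    change lft tp i S ((L.map (fun i => lft tp i S)).prod (tp.emb x)) = _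
    rw [ih hL.2, lft_emb]
    congr 1
    ext j
    by_cases h : j = i
    · subst h; simp [hL.1]
    · simp [h]

theorem tensor_eq_prod (T : H →L[ℂ] H) (Tn : Hn →L[ℂ] Hn) (hTn : IsTensorPowerOp tp T Tn) :
    Tn = (List.ofFn (fun i => lft tp i T)).prod := by
  refine op_ext tp fun x => ?_
  rw [hTn, List.ofFn_eq_map, lft_list tp T _ (List.nodup_finRange n)]
  simp

theorem tensor_spectrum (T : H →L[ℂ] H) (Tn : Hn →L[ℂ] Hn) (hTn : IsTensorPowerOp tp T Tn)
    {z : ℂ} (hz : z ∈ spectrum ℂ Tn) :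
    ∃ l : Fin n → ℂ, (∀ j, l j ∈ spectrum ℂ T) ∧ z = ∏ j, l j := by
  rw [tensor_eq_prod tp T Tn hTn] at hz
  obtain ⟨l, h1, h2⟩ := aux_comm_prod _ (fun i j => lft_comm tp i j T) hz
  exact ⟨l, fun j => lft_spectrum tp j T (h1 j), h2⟩

theorem tensor_norm (T : H →L[ℂ] H) (Tn : Hn →L[ℂ] Hn) (hTn : IsTensorPowerOp tp T Tn) (v : Hn) :
    ‖Tn v‖ ≤ ‖T‖ ^ n * ‖v‖ := by
  have : ∀ L : List (Fin n), ∀ v, ‖(L.map (fun i => lft tp i T)).prod v‖ ≤ ‖T‖ ^ L.length * ‖v‖ := by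
    intro L
    induction L with
    | nil => intro v; simp
    | cons i L ih =>
      intro v
      rw [List.map_cons, List.prod_cons]
      change ‖lft tp i T ((L.map (fun i => lft tp i T)).prod v)‖ ≤ _
      refine ((lft tp i T).le_of_opNorm_le (lft_norm tp i T) _).trans ?_
      rw [List.length_cons, pow_succ', mul_assoc]
      gcongr
      exact ih v
  have h := this (List.finRange n) v
  rwa [List.length_finRange, ← List.ofFn_eq_map, ← tensor_eq_prod tp T Tn hTn] at h

theorem tensor_adjoint (T : H →L[ℂ] H) (Tn : Hn →L[ℂ] Hn) (hTn : IsTensorPowerOp tp T Tn) :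
    IsTensorPowerOp tp (adjoint T) (adjoint Tn) := by
  intro x
  refine tp_ext tp fun y => ?_
  rw [adjoint_inner_left, hTn, tp.inner_emb, tp.inner_emb]
  refine Finset.prod_congr rfl fun i _ => ?_
  rw [adjoint_inner_left]

omit [CompleteSpace H] [CompleteSpace Hn] in
theorem sym_mem (x : Fin n → H) : ∑ σ : Equiv.Perm (Fin n), tp.emb (x ∘ σ) ∈ symSubspace tp :=
  Submodule.le_topologicalClosure _ (Submodule.subset_span ⟨x, rfl⟩)

omit [CompleteSpace H] [CompleteSpace Hn] in
theorem sym_invariant (T : H →L[ℂ] H) (Tn : Hn →L[ℂ] Hn) (hTn : IsTensorPowerOp tp T Tn) (v : Hn)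
    (hv : v ∈ symSubspace tp) : Tn v ∈ symSubspace tp := by
  have h1 : Submodule.span ℂ {y : Hn | ∃ x : Fin n → H,
      y = ∑ σ : Equiv.Perm (Fin n), tp.emb (x ∘ σ)} ≤
      (symSubspace tp).comap (Tn : Hn →ₗ[ℂ] Hn) := by
    rw [Submodule.span_le]
    rintro _ ⟨x, rfl⟩
    change Tn _ ∈ symSubspace tp
    rw [map_sum]
    have := sym_mem tp (fun i => T (x i))
    convert this using 2 with σ
    rw [hTn]; rfl
  have hc : IsClosed (((symSubspace tp).comap (Tn : Hn →ₗ[ℂ] Hn) : Submodule ℂ Hn) : Set Hn) := by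
    have : IsClosed ((symSubspace tp : Submodule ℂ Hn) : Set Hn) :=
      Submodule.isClosed_topologicalClosure _
    exact this.preimage Tn.continuous
  exact Submodule.topologicalClosure_minimal _ h1 hc hv

instance : CompleteSpace (symSubspace tp) :=
  (Submodule.isClosed_topologicalClosure _).completeSpace_coe

theorem sym_adjoint (T : H →L[ℂ] H) (Tn : Hn →L[ℂ] Hn) (hTn : IsTensorPowerOp tp T Tn)
    (Ts : symSubspace tp →L[ℂ] symSubspace tp) (hTs : ∀ x, (Ts x : Hn) = Tn x) (x : symSubspace tp) :
    (adjoint Ts x : Hn) = adjoint Tn x := by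
  have h := sym_invariant tp _ _ (tensor_adjoint tp T Tn hTn) x x.2
  have : adjoint Ts x = ⟨adjoint Tn x, h⟩ := by
    refine ext_inner_left ℂ fun v => ?_
    rw [adjoint_inner_right, Submodule.coe_inner, Submodule.coe_inner, hTs]
    change _ = ⟪(v : Hn), adjoint Tn x⟫_ℂ
    rw [adjoint_inner_right]
  rw [this]

theorem sym_spectrum (T : H →L[ℂ] H) (Tn : Hn →L[ℂ] Hn) (hTn : IsTensorPowerOp tp T Tn)
    (Ts : symSubspace tp →L[ℂ] symSubspace tp) (hTs : ∀ x, (Ts x : Hn) = Tn x) :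
    spectrum ℂ Ts ⊆ spectrum ℂ Tn := by
  refine spectrum_reduce (symSubspace tp).subtypeₗᵢ Ts Tn (fun x => (hTs x).symm) fun x y => ?_
  change ⟪(x : Hn), Tn y⟫_ℂ = ⟪((adjoint Ts x : symSubspace tp) : Hn), y⟫_ℂ
  rw [sym_adjoint tp T Tn hTn Ts hTs, adjoint_inner_left]

omit [CompleteSpace H] [CompleteSpace Hn] in
theorem norm_emb (x : Fin n → H) : ‖tp.emb x‖ = ∏ i, ‖x i‖ := by
  have h := tp.inner_emb x x
  simp only [inner_self_eq_norm_sq_to_K] at h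
  have h' : ‖tp.emb x‖ ^ 2 = (∏ i, ‖x i‖) ^ 2 := by
    rw [← Finset.prod_pow]; exact_mod_cast h
  exact (pow_left_inj₀ (norm_nonneg _) (Finset.prod_nonneg fun _ _ => norm_nonneg _) two_ne_zero).1 h'

omit [CompleteSpace H] [CompleteSpace Hn] in
theorem sym_lower : ∃ κ > (0 : ℝ), ∀ x : Fin n → H, (∀ i, ‖x i‖ = 1) →
    κ ≤ ‖∑ σ : Equiv.Perm (Fin n), tp.emb (x ∘ σ)‖ := by
  obtain ⟨c, hc, C, hC, h⟩ := exists_test_vector H n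
  refine ⟨c ^ n / C ^ n, by positivity, fun x hx => ?_⟩
  obtain ⟨y, hy, hyx⟩ := h x hx
  have h1 : ⟪tp.emb (fun _ => y), ∑ σ : Equiv.Perm (Fin n), tp.emb (x ∘ σ)⟫_ℂ =
      (n.factorial : ℂ) * ∏ i, ⟪y, x i⟫_ℂ := by
    rw [inner_sum]
    have : ∀ σ : Equiv.Perm (Fin n), ⟪tp.emb (fun _ => y), tp.emb (x ∘ σ)⟫_ℂ =
        ∏ i, ⟪y, x i⟫_ℂ := by
      intro σ
      rw [tp.inner_emb]
      exact Equiv.prod_comp σ (fun i => ⟪y, x i⟫_ℂ)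
    rw [Finset.sum_congr rfl fun σ _ => this σ, Finset.sum_const, Finset.card_univ,
      Fintype.card_perm, Fintype.card_fin, nsmul_eq_mul]
  have h2 := norm_inner_le_norm (𝕜 := ℂ) (tp.emb (fun _ => y))
    (∑ σ : Equiv.Perm (Fin n), tp.emb (x ∘ σ))
  rw [h1, norm_emb, norm_mul, norm_prod, Finset.prod_const, Finset.card_univ, Fintype.card_fin,
    Complex.norm_natCast] at h2
  have h3 : c ^ n ≤ ∏ i, ‖⟪y, x i⟫_ℂ‖ := by
    have := Finset.prod_le_prod (s := Finset.univ) (f := fun _ : Fin n => c)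
      (g := fun i => ‖⟪y, x i⟫_ℂ‖) (fun _ _ => hc.le) (fun i _ => hyx i)
    simpa using this
  have h4 : (1 : ℝ) ≤ n.factorial := by exact_mod_cast Nat.succ_le_of_lt n.factorial_pos
  have h5 : ‖y‖ ^ n ≤ C ^ n := pow_le_pow_left₀ (norm_nonneg _) hy n
  rw [div_le_iff₀ (by positivity)]
  have h6 : 0 < c ^ n := by positivity
  set N := ‖∑ σ : Equiv.Perm (Fin n), tp.emb (x ∘ σ)‖
  have hN : 0 ≤ N := norm_nonneg _
  nlinarith

omit [CompleteSpace H] [CompleteSpace Hn] in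
theorem emb_close (a b : ℕ → Fin n → H) (r : Fin n → ℂ)
    (hbb : ∀ i, Filter.Tendsto (fun k => ⟪b k i, b k i⟫_ℂ) Filter.atTop (nhds (r i)))
    (hab : ∀ i, Filter.Tendsto (fun k => ⟪a k i, b k i⟫_ℂ) Filter.atTop (nhds (r i)))
    (hba : ∀ i, Filter.Tendsto (fun k => ⟪b k i, a k i⟫_ℂ) Filter.atTop (nhds (r i)))
    (haa : ∀ i, Filter.Tendsto (fun k => ⟪a k i, a k i⟫_ℂ) Filter.atTop (nhds (r i))) :
    Filter.Tendsto (fun k => ‖tp.emb (a k) - tp.emb (b k)‖) Filter.atTop (nhds 0) := by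
  have h1 : Filter.Tendsto (fun k => ⟪tp.emb (a k) - tp.emb (b k), tp.emb (a k) - tp.emb (b k)⟫_ℂ)
      Filter.atTop (nhds 0) := by
    have e : ∀ k, ⟪tp.emb (a k) - tp.emb (b k), tp.emb (a k) - tp.emb (b k)⟫_ℂ =
        ∏ i, ⟪a k i, a k i⟫_ℂ - ∏ i, ⟪a k i, b k i⟫_ℂ - (∏ i, ⟪b k i, a k i⟫_ℂ
          - ∏ i, ⟪b k i, b k i⟫_ℂ) := by
      intro k
      rw [inner_sub_left, inner_sub_right, inner_sub_right]
      simp only [tp.inner_emb]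
    simp only [e]
    have := ((tendsto_finsetProd Finset.univ fun i _ => haa i).sub
      (tendsto_finsetProd Finset.univ fun i _ => hab i)).sub
      ((tendsto_finsetProd Finset.univ fun i _ => hba i).sub
      (tendsto_finsetProd Finset.univ fun i _ => hbb i))
    simpa using this
  have h2 := h1.norm
  simp only [inner_self_eq_norm_sq_to_K, norm_pow, norm_zero] at h2
  have h3 := h2.sqrt
  simpa [Real.sqrt_sq] using h3

omit [CompleteSpace H] [CompleteSpace Hn] in
theorem sym_aps (T : H →L[ℂ] H) (Tn : Hn →L[ℂ] Hn) (hTn : IsTensorPowerOp tp T Tn)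
    (Ts : symSubspace tp →L[ℂ] symSubspace tp) (hTs : ∀ x, (Ts x : Hn) = Tn x)
    (l : Fin n → ℂ) (hl : ∀ i, l i ∈ aps T) : ∏ i, l i ∈ aps Ts := by
  by_contra hcon
  obtain ⟨ε, hε, hb⟩ := not_mem_aps hcon
  obtain ⟨κ, hκ, hlow⟩ := sym_lower tp
  have hx : ∀ (k : ℕ) (i : Fin n), ∃ x : H, ‖x‖ = 1 ∧ ‖T x - l i • x‖ < 1 / ((k : ℝ) + 1) :=
    fun k i => hl i _ (by positivity)
  choose x hx1 hx2 using hx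
  let a : ℕ → Fin n → H := fun k i => T (x k i)
  let b : ℕ → Fin n → H := fun k i => l i • x k i
  have hdiff : ∀ i, Filter.Tendsto (fun k => a k i - b k i) Filter.atTop (nhds 0) := by
    intro i
    refine squeeze_zero_norm (fun k => (hx2 k i).le) tendsto_one_div_add_atTop_nhds_zero_nat
  have hbb' : ∀ k i, ⟪b k i, b k i⟫_ℂ = ((‖l i‖ ^ 2 : ℝ) : ℂ) := by
    intro k i
    rw [inner_self_eq_norm_sq_to_K]
    simp [b, norm_smul, hx1]
  have hbnd : ∀ k i, ‖b k i‖ = ‖l i‖ := by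
    intro k i; simp [b, norm_smul, hx1]
  have hd0 : ∀ i, Filter.Tendsto (fun k => ‖a k i - b k i‖) Filter.atTop (nhds 0) := by
    intro i; simpa using (hdiff i).norm
  have hdb : ∀ i, Filter.Tendsto (fun k => ⟪a k i - b k i, b k i⟫_ℂ) Filter.atTop (nhds 0) := by
    intro i
    refine squeeze_zero_norm (a := fun k => ‖a k i - b k i‖ * ‖l i‖) (fun k => ?_) ?_
    · rw [← hbnd k i]; exact norm_inner_le_norm _ _
    · simpa using (hd0 i).mul_const ‖l i‖
  have hbd : ∀ i, Filter.Tendsto (fun k => ⟪b k i, a k i - b k i⟫_ℂ) Filter.atTop (nhds 0) := by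
    intro i
    refine squeeze_zero_norm (a := fun k => ‖l i‖ * ‖a k i - b k i‖) (fun k => ?_) ?_
    · rw [← hbnd k i]; exact norm_inner_le_norm _ _
    · simpa using (hd0 i).const_mul ‖l i‖
  have hdd : ∀ i, Filter.Tendsto (fun k => ⟪a k i - b k i, a k i - b k i⟫_ℂ) Filter.atTop (nhds 0) := by
    intro i
    refine squeeze_zero_norm (a := fun k => ‖a k i - b k i‖ * ‖a k i - b k i‖) (fun k => ?_) ?_
    · exact norm_inner_le_norm _ _
    · simpa using (hd0 i).mul (hd0 i)
  let r : Fin n → ℂ := fun i => ((‖l i‖ ^ 2 : ℝ) : ℂ)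
  have hbb : ∀ i, Filter.Tendsto (fun k => ⟪b k i, b k i⟫_ℂ) Filter.atTop (nhds (r i)) := by
    intro i; simp only [hbb']; exact tendsto_const_nhds
  have hab : ∀ i, Filter.Tendsto (fun k => ⟪a k i, b k i⟫_ℂ) Filter.atTop (nhds (r i)) := by
    intro i
    have := (hdb i).add (hbb i)
    simpa [inner_sub_left] using this
  have hba : ∀ i, Filter.Tendsto (fun k => ⟪b k i, a k i⟫_ℂ) Filter.atTop (nhds (r i)) := by
    intro i
    have := (hbd i).add (hbb i)
    simpa [inner_sub_right] using this
  have haa : ∀ i, Filter.Tendsto (fun k => ⟪a k i, a k i⟫_ℂ) Filter.atTop (nhds (r i)) := by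
    intro i
    have := (((hdd i).add (hdb i)).add (hbd i)).add (hbb i)
    have e : ∀ k, ⟪a k i, a k i⟫_ℂ = ⟪a k i - b k i, a k i - b k i⟫_ℂ + ⟪a k i - b k i, b k i⟫_ℂ
        + ⟪b k i, a k i - b k i⟫_ℂ + ⟪b k i, b k i⟫_ℂ := by
      intro k
      simp only [inner_sub_left, inner_sub_right]; ring
    simp only [e]
    simpa using this
  have hσ : ∀ σ : Equiv.Perm (Fin n), Filter.Tendsto
      (fun k => ‖tp.emb (a k ∘ σ) - tp.emb (b k ∘ σ)‖) Filter.atTop (nhds 0) := by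
    intro σ
    exact emb_close tp (fun k => a k ∘ σ) (fun k => b k ∘ σ) (r ∘ σ) (fun i => hbb (σ i))
      (fun i => hab (σ i)) (fun i => hba (σ i)) (fun i => haa (σ i))
  have hsum : Filter.Tendsto (fun k => ∑ σ : Equiv.Perm (Fin n),
      ‖tp.emb (a k ∘ σ) - tp.emb (b k ∘ σ)‖) Filter.atTop (nhds 0) := by
    simpa using tendsto_finsetSum Finset.univ fun σ _ => hσ σ
  have hpos : 0 < ε * κ := by positivity
  obtain ⟨k, hk⟩ := (hsum.eventually_lt_const hpos).exists
  let v : symSubspace tp := ⟨_, sym_mem tp (x k)⟩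
  have h1 := hb v
  have h2 : κ ≤ ‖v‖ := hlow (x k) (hx1 k)
  have h3 : ((Ts v - (∏ i, l i) • v : symSubspace tp) : Hn) =
      ∑ σ : Equiv.Perm (Fin n), (tp.emb (a k ∘ σ) - tp.emb (b k ∘ σ)) := by
    change (Ts v : Hn) - (∏ i, l i) • (v : Hn) = _
    rw [hTs, Finset.sum_sub_distrib]
    change Tn (∑ σ : Equiv.Perm (Fin n), tp.emb (x k ∘ σ)) -
      (∏ i, l i) • (∑ σ : Equiv.Perm (Fin n), tp.emb (x k ∘ σ)) = _
    rw [map_sum, Finset.smul_sum]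
    congr 1
    · exact Finset.sum_congr rfl fun σ _ => hTn _
    · refine Finset.sum_congr rfl fun σ _ => ?_
      have := emb_smul_all tp (x k ∘ σ) (l ∘ σ)
      have e : ∏ i, (l ∘ σ) i = ∏ i, l i := Equiv.prod_comp σ l
      rw [e] at this
      exact this.symm
  have h4 : ‖Ts v - (∏ i, l i) • v‖ ≤ ∑ σ : Equiv.Perm (Fin n),
      ‖tp.emb (a k ∘ σ) - tp.emb (b k ∘ σ)‖ := by
    rw [← Submodule.norm_coe, h3]
    exact norm_sum_le _ _
  have h5 : ε * κ ≤ ε * ‖v‖ := by gcongr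
  linarith

/-- products of points all in `aps T` or all in the approximate defect spectrum -/
theorem sym_mem_spectrum (T : H →L[ℂ] H) (Tn : Hn →L[ℂ] Hn) (hTn : IsTensorPowerOp tp T Tn)
    (Ts : symSubspace tp →L[ℂ] symSubspace tp) (hTs : ∀ x, (Ts x : Hn) = Tn x)
    (l : Fin n → ℂ) (hl : (∀ i, l i ∈ aps T) ∨ (∀ i, star (l i) ∈ aps (adjoint T))) :
    ∏ i, l i ∈ spectrum ℂ Ts := by
  rcases hl with hl | hl
  · exact aps_subset _ (sym_aps tp T Tn hTn Ts hTs l hl)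
  · have := sym_aps tp _ _ (tensor_adjoint tp T Tn hTn) (adjoint Ts)
      (sym_adjoint tp T Tn hTn Ts hTs) (fun i => star (l i)) hl
    rw [← spectrum_adj, star_prod]
    exact aps_subset _ this

theorem sym_prod_mem (T : H →L[ℂ] H) (Tn : Hn →L[ℂ] Hn) (hTn : IsTensorPowerOp tp T Tn)
    (Ts : symSubspace tp →L[ℂ] symSubspace tp) (hTs : ∀ x, (Ts x : Hn) = Tn x)
    (l : Fin n → ℂ) (hl : ∀ i, l i ∈ spectrum ℂ T) (h0 : ∏ i, l i ≠ 0) :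
    ∏ i, l i ∈ spectrum ℂ Ts := by
  let a : Set ℂ := aps T
  let d : Set ℂ := {z | star z ∈ aps (adjoint T)}
  have ha : IsClosed a := isClosed_aps T
  have hd : IsClosed d := (isClosed_aps (adjoint T)).preimage continuous_star
  have hda : ∀ z, z ∈ d → z ∈ spectrum ℂ T := fun z hz => spectrum_adj.1 (aps_subset _ hz)
  have haa : ∀ z, z ∈ a → z ∈ spectrum ℂ T := fun z hz => aps_subset _ hz
  have hU : IsOpen (d \ a) := by
    have : d \ a = spectrum ℂ T \ aps T := by
      ext z
      constructor
      · rintro ⟨h1, h2⟩; exact ⟨hda z h1, h2⟩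
      · rintro ⟨h1, h2⟩; exact ⟨(spectrum_sub T h1).resolve_left h2, h2⟩
    rw [this]; exact isOpen_spec_diff T
  have hV : IsOpen (a \ d) := by
    have : a \ d = star ⁻¹' (spectrum ℂ (adjoint T) \ aps (adjoint T)) := by
      ext z
      constructor
      · rintro ⟨h1, h2⟩; exact ⟨spectrum_adj.2 (haa z h1), h2⟩
      · rintro ⟨h1, h2⟩; exact ⟨(spectrum_sub T (spectrum_adj.1 h1)).resolve_right h2, h2⟩
    rw [this]; exact (isOpen_spec_diff (adjoint T)).preimage continuous_star
  have hbs : Bornology.IsBounded (spectrum ℂ T) := spectrum.isBounded T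
  have hne : ∀ i, l i ≠ 0 := fun i hi => h0 (Finset.prod_eq_zero (Finset.mem_univ i) hi)
  obtain ⟨L', e1, e2, e3⟩ := mix_all ha hd hU hV (hbs.subset haa) (hbs.subset hda) (List.ofFn l)
    (by
      intro y hy
      obtain ⟨i, rfl⟩ := (List.mem_ofFn' l y).1 hy
      exact ⟨spectrum_sub T (hl i), hne i⟩)
  rw [List.length_ofFn] at e1
  rw [List.prod_ofFn] at e2
  subst e1
  have e4 : ∏ i, L'.get i = L'.prod := by
    rw [← List.prod_ofFn, List.ofFn_get]
  rw [← e2, ← e4]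
  refine sym_mem_spectrum tp T Tn hTn Ts hTs _ ?_
  rcases e3 with e3 | e3
  · left; exact fun i => e3 _ (List.get_mem _ _)
  · right; exact fun i => e3 _ (List.get_mem _ _)

theorem sym_pow_mem (T : H →L[ℂ] H) (Tn : Hn →L[ℂ] Hn) (hTn : IsTensorPowerOp tp T Tn)
    (Ts : symSubspace tp →L[ℂ] symSubspace tp) (hTs : ∀ x, (Ts x : Hn) = Tn x)
    (z : ℂ) (hz : z ∈ spectrum ℂ T) : z ^ n ∈ spectrum ℂ Ts := by
  have := sym_mem_spectrum tp T Tn hTn Ts hTs (fun _ => z)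
    ((spectrum_sub T hz).imp (fun h _ => h) (fun h _ => h))
  simpa using this
end

theorem final_eq {H F : Type*} [NormedAddCommGroup H] [InnerProductSpace ℂ H] [CompleteSpace H]
    [Nontrivial H] [NormedAddCommGroup F] [InnerProductSpace ℂ F] [CompleteSpace F]
    (T : H →L[ℂ] H) (hT : ‖T‖ < 1) (G : F →L[ℂ] F)
    (h1 : ∀ n (l : Fin n → ℂ), (∀ j, l j ∈ spectrum ℂ T) → ∏ j, l j ≠ 0 → ∏ j, l j ∈ spectrum ℂ G)
    (h2 : ∀ n, ∀ z ∈ spectrum ℂ T, z ^ n ∈ spectrum ℂ G)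
    (h3 : ∀ z ∈ spectrum ℂ G, z ≠ 0 → ∃ n, ∃ l : Fin n → ℂ,
      (∀ j, l j ∈ spectrum ℂ T) ∧ z = ∏ j, l j) :
    spectrum ℂ G = {1} ∪ closure (⋃ n : ℕ,
        {z : ℂ | ∃ l : Fin (n + 1) → ℂ,
          (∀ j, l j ∈ spectrum ℂ T) ∧ z = ∏ j, l j}) := by
  obtain ⟨w, hw⟩ := spectrum.nonempty T
  have hw1 : ‖w‖ < 1 := (spectrum.norm_le_norm_of_mem hw).trans_lt hT
  have hlim : Filter.Tendsto (fun n : ℕ => w ^ (n + 1)) Filter.atTop (nhds 0) :=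
    (tendsto_pow_atTop_nhds_zero_of_norm_lt_one hw1).comp (Filter.tendsto_add_atTop_nat 1)
  have hcl : IsClosed (spectrum ℂ G) := spectrum.isClosed G
  have h0 : (0 : ℂ) ∈ spectrum ℂ G :=
    hcl.mem_of_tendsto hlim (Filter.Eventually.of_forall fun n => h2 _ w hw)
  apply Set.Subset.antisymm
  · intro z hz
    by_cases hz0 : z = 0
    · subst hz0
      right
      refine mem_closure_of_tendsto hlim (Filter.Eventually.of_forall fun n => ?_)
      exact Set.mem_iUnion.2 ⟨n, fun _ => w, fun _ => hw, by simp⟩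
    · obtain ⟨n, l, hl, rfl⟩ := h3 z hz hz0
      cases n with
      | zero => left; simp
      | succ n => right; exact subset_closure (Set.mem_iUnion.2 ⟨n, l, hl, rfl⟩)
  · rw [Set.union_subset_iff]
    constructor
    · rintro _ rfl
      simpa using h2 0 w hw
    · refine closure_minimal ?_ hcl
      intro z hz
      obtain ⟨n, l, hl, rfl⟩ := Set.mem_iUnion.1 hz
      by_cases hz0 : ∏ j, l j = 0
      · rw [hz0]; exact h0
      · exact h1 _ l hl hz0



/-- The spectra of the symmetric second quantization `Γ^⊙(T)` (on the symmetric
Fock space `⊕ₙ H^{⊙n}`) and of the second quantization `Γ(T)` (on the full Fock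
space `⊕ₙ H^{⊗n}`) of a strict contraction `T` coincide, and both equal
`{1} ∪ closure( ⋃_{n≥1} { λ₁⋯λₙ : λⱼ ∈ σ(T) } )`. -/
theorem spectrum_symmetricSecondQuantization_eq
    {H F F' : Type*} [NormedAddCommGroup H] [InnerProductSpace ℂ H] [CompleteSpace H]
    [Nontrivial H]
    [NormedAddCommGroup F] [InnerProductSpace ℂ F] [CompleteSpace F]
    [NormedAddCommGroup F'] [InnerProductSpace ℂ F'] [CompleteSpace F']
    (Hn : ℕ → Type*) [∀ n, NormedAddCommGroup (Hn n)]
    [∀ n, InnerProductSpace ℂ (Hn n)] [∀ n, CompleteSpace (Hn n)]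
    (tp : ∀ n, TensorPowerStructure H (Hn n) n)
    -- the full Fock space `F = Γ(H)`
    (J : ∀ n, Hn n →ₗᵢ[ℂ] F)
    (horth : ∀ n m, n ≠ m → ∀ (x : Hn n) (y : Hn m), ⟪J n x, J m y⟫_ℂ = 0)
    (hdense : Dense ((Submodule.span ℂ
      (⋃ n : ℕ, Set.range (J n)) : Submodule ℂ F) : Set F))
    -- the symmetric Fock space `F' = Γ^⊙(H)`
    (J' : ∀ n, ↥(symSubspace (tp n)) →ₗᵢ[ℂ] F')
    (horth' : ∀ n m, n ≠ m →
      ∀ (x : symSubspace (tp n)) (y : symSubspace (tp m)), ⟪J' n x, J' m y⟫_ℂ = 0)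
    (hdense' : Dense ((Submodule.span ℂ
      (⋃ n : ℕ, Set.range (J' n)) : Submodule ℂ F') : Set F'))
    (T : H →L[ℂ] H) (hT : ‖T‖ < 1)
    (Tn : ∀ n, Hn n →L[ℂ] Hn n) (hTn : ∀ n, IsTensorPowerOp (tp n) T (Tn n))
    (Ts : ∀ n, ↥(symSubspace (tp n)) →L[ℂ] ↥(symSubspace (tp n)))
    (hTs : ∀ (n : ℕ) (x : symSubspace (tp n)), ((Ts n x : Hn n)) = Tn n x)
    (G : F →L[ℂ] F) (hG : ∀ (n : ℕ) (x : Hn n), G (J n x) = J n (Tn n x))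
    (G' : F' →L[ℂ] F')
    (hG' : ∀ (n : ℕ) (x : symSubspace (tp n)), G' (J' n x) = J' n (Ts n x)) :
    spectrum ℂ G' = spectrum ℂ G ∧
      spectrum ℂ G = {1} ∪ closure (⋃ n : ℕ,
        {z : ℂ | ∃ l : Fin (n + 1) → ℂ,
          (∀ j, l j ∈ spectrum ℂ T) ∧ z = ∏ j, l j}) := by
  have hFock := fock_spectrum Hn J horth hdense Tn G hG ‖T‖ (norm_nonneg _) hT
    (fun n x => tensor_norm (tp n) T (Tn n) (hTn n) x)
  have hFock' := fock_spectrum (fun n => symSubspace (tp n)) J' horth' hdense' Ts G' hG' ‖T‖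
    (norm_nonneg _) hT (fun n x => by
      have := tensor_norm (tp n) T (Tn n) (hTn n) x
      rw [← hTs] at this
      exact this)
  have hsub : ∀ n, spectrum ℂ (Ts n) ⊆ spectrum ℂ (Tn n) := fun n =>
    sym_spectrum (tp n) T (Tn n) (hTn n) (Ts n) (hTs n)
  have hP := fun n => sym_prod_mem (tp n) T (Tn n) (hTn n) (Ts n) (hTs n)
  have hQ := fun n => sym_pow_mem (tp n) T (Tn n) (hTn n) (Ts n) (hTs n)
  have e1 := final_eq T hT G (fun n l hl h0 => hFock.1 n (hsub n (hP n l hl h0)))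
    (fun n z hz => hFock.1 n (hsub n (hQ n z hz)))
    (fun z hz hz0 => by
      obtain ⟨n, hn⟩ := hFock.2 z hz hz0
      exact ⟨n, tensor_spectrum (tp n) T (Tn n) (hTn n) hn⟩)
  have e2 := final_eq T hT G' (fun n l hl h0 => hFock'.1 n (hP n l hl h0))
    (fun n z hz => hFock'.1 n (hQ n z hz))
    (fun z hz hz0 => by
      obtain ⟨n, hn⟩ := hFock'.2 z hz hz0
      exact ⟨n, tensor_spectrum (tp n) T (Tn n) (hTn n) (hsub n hn)⟩)
  exact ⟨e2.trans e1.symm, e1⟩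
end
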